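/- Let Ω ⊂ ℂ be a bounded domain containing 0 whose boundary is an analytic Jordan curve, and let u be a negative continuous subharmonic exhaustion of Ω with finite Monge–Ampère mass. Then H^p_u(Ω) ⊂ H^p(Ω) and the inclusion map H^p_u(Ω) → H^p(Ω) is continuous between the normed spaces; moreover, if H^p_u(Ω) ≠ H^p(Ω), then the image of this inclusion is not a closed subspace of H^p(Ω) (since it contains all bounded holomorphic functions, which are dense in H^p(Ω)). -/

import Mathlib

open MeasureTheory Filter Metric Complex Set
open scoped Real ENNReal Topology

noncomputable section

/-- The Laplacian of a real-valued function on `ℂ ≅ ℝ²`. -/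
def lap (φ : ℂ → ℝ) (z : ℂ) : ℝ :=
  fderiv ℝ (fun w => fderiv ℝ φ w 1) z 1 +
    fderiv ℝ (fun w => fderiv ℝ φ w Complex.I) z Complex.I

/-- `h` is harmonic on `s`. -/
def HarmonicOn (h : ℂ → ℝ) (s : Set ℂ) : Prop :=
  ContDiffOn ℝ 2 h s ∧ ∀ z ∈ s, lap h z = 0

/-- `u` is subharmonic on `s` (continuous with the sub-mean-value property). -/
def SubharmonicOn (u : ℂ → ℝ) (s : Set ℂ) : Prop :=
  ContinuousOn u s ∧ ∀ z ∈ s, ∀ r : ℝ, 0 < r → closedBall z r ⊆ s →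
    u z ≤ (2 * Real.pi)⁻¹ *
      ∫ t in (0:ℝ)..(2 * Real.pi), u (z + (r : ℂ) * Complex.exp ((t : ℂ) * Complex.I))

/-- `u` is a negative continuous subharmonic exhaustion function for `Ω`:
sublevel sets `{u < c}`, `c < 0`, are relatively compact in `Ω`. -/
structure IsExhaustion (u : ℂ → ℝ) (Ω : Set ℂ) : Prop where
  neg : ∀ z ∈ Ω, u z < 0
  subh : SubharmonicOn u Ω
  exh : ∀ c : ℝ, c < 0 → IsCompact (closure {z | z ∈ Ω ∧ u z < c}) ∧
    closure {z | z ∈ Ω ∧ u z < c} ⊆ Ω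

/-- `ν` is the Riesz measure `dd^c u = (1/4) Δu dA` of `u` on `Ω`, characterized
distributionally: `∫ φ dν = (1/4) ∫_Ω u Δφ dA` for test functions `φ`. -/
def IsRieszMeasure (u : ℂ → ℝ) (Ω : Set ℂ) (ν : Measure ℂ) : Prop :=
  ν Ωᶜ = 0 ∧
  ∀ φ : ℂ → ℝ, ContDiff ℝ 2 φ → HasCompactSupport φ → tsupport φ ⊆ Ω →
    ∫ z, φ z ∂ν = (4 : ℝ)⁻¹ * ∫ z in Ω, u z * lap φ z

/-- `μ` is the Monge–Ampère measure `μ_{u,r} = dd^c max(u,r) - χ_{Ω∖{u<r}} dd^c u`,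
where `ν = dd^c u`. -/
def IsMAMeasure (u : ℂ → ℝ) (Ω : Set ℂ) (ν : Measure ℂ) (r : ℝ) (μ : Measure ℂ) : Prop :=
  ∃ νr : Measure ℂ, IsRieszMeasure (fun z => max (u z) r) Ω νr ∧
    μ = νr - ν.restrict {z | z ∈ Ω ∧ r ≤ u z}

/-- The `p`-th power of the Poletsky–Stessin Hardy "norm",
`limsup_{r→0⁻} ∫ |f|^p dμ_{u,r}`. -/
def psNormPow (p : ℝ) (μfam : ℝ → Measure ℂ) (f : ℂ → ℂ) : ℝ≥0∞ :=
  Filter.limsup (fun r => ∫⁻ z, ENNReal.ofReal (‖f z‖ ^ p) ∂(μfam r))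
    (nhdsWithin 0 (Set.Iio 0))

/-- The Poletsky–Stessin Hardy norm. -/
def psNorm (p : ℝ) (μfam : ℝ → Measure ℂ) (f : ℂ → ℂ) : ℝ≥0∞ :=
  psNormPow p μfam f ^ (1 / p)

/-- Membership in the Poletsky–Stessin Hardy space `H^p_u(Ω)`, where `μfam r = μ_{u,r}`. -/
def MemPS (p : ℝ) (Ω : Set ℂ) (μfam : ℝ → Measure ℂ) (f : ℂ → ℂ) : Prop :=
  DifferentiableOn ℂ f Ω ∧ psNormPow p μfam f < ⊤

/-- Membership in the classical Hardy space `H^p(Ω)`: `|f|^p` has a harmonic majorant. -/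
def MemHClassical (p : ℝ) (Ω : Set ℂ) (f : ℂ → ℂ) : Prop :=
  DifferentiableOn ℂ f Ω ∧
    ∃ h : ℂ → ℝ, HarmonicOn h Ω ∧ ∀ z ∈ Ω, ‖f z‖ ^ p ≤ h z

/-- A bounded domain in `ℂ` containing `0` whose boundary is an analytic Jordan curve:
there is a conformal map of the unit disc onto `Ω` extending analytically and injectively
across the closed disc, carrying the unit circle onto the boundary of `Ω`. -/
structure AnalyticJordanDomain (Ω : Set ℂ) : Prop where
  isOpen : IsOpen Ω
  isConnected : IsConnected Ω
  isBounded : Bornology.IsBounded Ω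
  zero_mem : (0:ℂ) ∈ Ω
  analyticBoundary : ∃ (U : Set ℂ) (ψ : ℂ → ℂ), IsOpen U ∧ closedBall (0:ℂ) 1 ⊆ U ∧
    DifferentiableOn ℂ ψ U ∧ Set.InjOn ψ U ∧ ψ '' ball (0:ℂ) 1 = Ω ∧
    ψ '' sphere (0:ℂ) 1 = frontier Ω

/-- `μ` is the boundary Monge–Ampère measure: the weak* limit of the measures
`μfam r = μ_{u,r}` as `r → 0⁻`. -/
def IsBoundaryMA (μfam : ℝ → Measure ℂ) (μ : Measure ℂ) : Prop :=
  ∀ φ : ℂ → ℝ, Continuous φ →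
    Filter.Tendsto (fun r => ∫ z, φ z ∂(μfam r)) (nhdsWithin 0 (Set.Iio 0))
      (nhds (∫ z, φ z ∂μ))

/-- `f` has nontangential limit `L` at the boundary point `ξ` of `Ω`. -/
def NTLim (Ω : Set ℂ) (f : ℂ → ℂ) (ξ : ℂ) (L : ℂ) : Prop :=
  ∀ C : ℝ, 1 < C →
    Filter.Tendsto f
      (nhdsWithin ξ {z | z ∈ Ω ∧ dist z ξ ≤ C * infDist z (frontier Ω)}) (nhds L)

/-- Arc length measure on the boundary of `Ω` (1-dimensional Hausdorff measure). -/
def arcLen (Ω : Set ℂ) : Measure ℂ := (μH[1] : Measure ℂ).restrict (frontier Ω)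


/-- `h` is the least harmonic majorant of `|f|^p` on `Ω`; the classical Hardy norm of `f`
is `(h 0)^{1/p}`. -/
def IsLeastHarmMaj (p : ℝ) (Ω : Set ℂ) (f : ℂ → ℂ) (h : ℂ → ℝ) : Prop :=
  HarmonicOn h Ω ∧ (∀ z ∈ Ω, ‖f z‖ ^ p ≤ h z) ∧
    ∀ h' : ℂ → ℝ, HarmonicOn h' Ω → (∀ z ∈ Ω, ‖f z‖ ^ p ≤ h' z) →
      ∀ z ∈ Ω, h z ≤ h' z

/-!
For a `C²` subharmonic `Ψ ≥ 0` one has `∫_{u < r} Ψ dν ≤ ∫ Ψ dμ_{u,r}`. Let `G` be a conformal map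
of `Ω` onto the unit disc and `ρ < 1`. Take for `Ψ` a smoothing of `|f|^p`, glued inside
`{|G| < ρ}` by a smooth maximum to a harmonic `H` which approximates it on `{|G| = ρ}`. For `r`
near `0` the measure `μ_{u,r}` does not charge `{|G| ≤ ρ}`, so the right-hand side is about
`∫ |f|^p dμ_{u,r}`, while by Harnack's inequality `H` is comparable to its value at the centre on a
fixed compact set of positive `ν`-measure. Hence `|f|^p` has harmonic majorants on `{|G| ≤ ρ}` whose
value at the centre is at most `C ‖f‖^p` with `C` independent of `ρ`, and a normal families argument
as `ρ → 1` gives a majorant on `Ω`.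

If `f ∈ H^p ∖ H^p_u`, consider the bounded functions `F_k = f ∘ ψ (ρ_k G)` with `ψ = G⁻¹` and
`ρ_k → 1`. Were all `∑ a_k F_k` with `a ∈ ℓ¹` in `H^p_u`, the Banach–Steinhaus theorem on `ℓ¹` would
bound the `H^p_u`-norms of the `F_k`, and Fatou's lemma would put `f` in `H^p_u`. So some
`∑ a_k F_k` is not in `H^p_u`; its partial sums are bounded, hence in `H^p_u`, and they converge to
it in `H^p`.
-/

/-! ### The Laplacian -/

section Laplacian

open InnerProductSpace Laplacian

variable {φ χ g : ℂ → ℝ} {f : ℂ → ℂ} {s : Set ℂ} {z : ℂ}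

theorem differentiableAt_fderiv_apply (hφ : ContDiffAt ℝ 2 φ z) (e : ℂ) :
    DifferentiableAt ℝ (fun w => fderiv ℝ φ w e) z :=
  ((hφ.fderiv_right (m := 1) (by norm_num)).differentiableAt (by simp)).clm_apply
    (differentiableAt_const e)

theorem lap_eq_laplacian (hφ : ContDiffAt ℝ 2 φ z) : lap φ z = Δ φ z := by
  have hd : DifferentiableAt ℝ (fderiv ℝ φ) z :=
    (hφ.fderiv_right (m := 1) (by norm_num)).differentiableAt (by simp)
  have key (e : ℂ) : fderiv ℝ (fun w => fderiv ℝ φ w e) z e = fderiv ℝ (fderiv ℝ φ) z e e := by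
    simp [fderiv_clm_apply hd]
  simp [lap, key, laplacian_eq_iteratedFDeriv_complexPlane, iteratedFDeriv_two_apply]

theorem lap_congr (h : φ =ᶠ[𝓝 z] χ) : lap φ z = lap χ z := by
  have key (e : ℂ) : (fun w => fderiv ℝ φ w e) =ᶠ[𝓝 z] fun w => fderiv ℝ χ w e :=
    (h.fderiv (𝕜 := ℝ)).mono fun w hw => by simp only [hw]
  simp only [lap, (key _).fderiv_eq]

theorem lap_add (hφ : ContDiffAt ℝ 2 φ z) (hχ : ContDiffAt ℝ 2 χ z) :
    lap (fun w => φ w + χ w) z = lap φ z + lap χ z := by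
  rw [lap_eq_laplacian (hφ.add hχ), lap_eq_laplacian hφ, lap_eq_laplacian hχ]
  exact hφ.laplacian_add hχ

theorem lap_sub (hφ : ContDiffAt ℝ 2 φ z) (hχ : ContDiffAt ℝ 2 χ z) :
    lap (fun w => φ w - χ w) z = lap φ z - lap χ z := by
  rw [lap_eq_laplacian (hφ.sub hχ), lap_eq_laplacian hφ, lap_eq_laplacian hχ]
  exact hφ.laplacian_sub hχ

theorem lap_comp (hg : ContDiffAt ℝ 2 g z) {k k' : ℝ → ℝ} {k'' : ℝ}
    (hk : ∀ᶠ t in 𝓝 (g z), HasDerivAt k (k' t) t) (hk' : HasDerivAt k' k'' (g z)) :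
    lap (fun w => k (g w)) z =
      k'' * (fderiv ℝ g z 1 ^ 2 + fderiv ℝ g z Complex.I ^ 2) + k' (g z) * lap g z := by
  have hgz : DifferentiableAt ℝ g z := hg.differentiableAt (by simp)
  have hfst (e : ℂ) : (fun w => fderiv ℝ (fun w => k (g w)) w e) =ᶠ[𝓝 z]
      fun w => k' (g w) * fderiv ℝ g w e := by
    filter_upwards [hgz.continuousAt.eventually hk, hg.eventually (by simp)] with w hkw hgw
    have := (hkw.comp_hasFDerivAt w (hgw.differentiableAt (by simp)).hasFDerivAt).fderiv
    simp only [Function.comp_def] at this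
    simp [this]
  have hsnd (e : ℂ) : fderiv ℝ (fun w => fderiv ℝ (fun w => k (g w)) w e) z e =
      k'' * fderiv ℝ g z e ^ 2 + k' (g z) * fderiv ℝ (fun w => fderiv ℝ g w e) z e := by
    rw [(hfst e).fderiv_eq]
    refine (congrArg (· e) ((hk'.comp_hasFDerivAt z hgz.hasFDerivAt).mul
      (differentiableAt_fderiv_apply hg e).hasFDerivAt).fderiv).trans ?_
    simp only [_root_.add_apply, _root_.smul_apply, smul_eq_mul, Function.comp_apply]
    ring
  simp only [lap, hsnd]
  ring

theorem lap_sq (hg : ContDiffAt ℝ 2 g z) : lap (fun w => g w ^ 2) z =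
    2 * (fderiv ℝ g z 1 ^ 2 + fderiv ℝ g z Complex.I ^ 2) + 2 * g z * lap g z :=
  lap_comp hg (k := fun t => t ^ 2) (k' := fun t => 2 * t)
    (Eventually.of_forall fun t => by simpa using hasDerivAt_pow 2 t)
    (by simpa using (hasDerivAt_id (g z)).const_mul 2)

theorem fderiv_sq_apply (hg : DifferentiableAt ℝ g z) (e : ℂ) :
    fderiv ℝ (fun w => g w ^ 2) z e = 2 * g z * fderiv ℝ g z e := by
  simp [fderiv_fun_pow 2 hg]

theorem lap_eq_zero_of_harmonicAt (h : HarmonicAt φ z) : lap φ z = 0 := by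
  rw [lap_eq_laplacian h.1, h.2.self_of_nhds, Pi.zero_apply]

theorem harmonicOn_iff_harmonicOnNhd (hs : IsOpen s) :
    HarmonicOn φ s ↔ HarmonicOnNhd φ s := by
  refine ⟨fun h z hz => ?_, fun h => ⟨h.contDiffOn, fun z hz => lap_eq_zero_of_harmonicAt (h z hz)⟩⟩
  have hc : ∀ w ∈ s, ContDiffAt ℝ 2 φ w := fun w hw => h.1.contDiffAt (hs.mem_nhds hw)
  refine ⟨hc z hz, ?_⟩
  filter_upwards [hs.mem_nhds hz] with w hw
  rw [← lap_eq_laplacian (hc w hw), h.2 w hw, Pi.zero_apply]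

theorem hasFDerivAt_restrictScalars (hf : DifferentiableAt ℂ f z) :
    HasFDerivAt f ((ContinuousLinearMap.toSpanSingleton ℂ (deriv f z)).restrictScalars ℝ) z :=
  hf.hasDerivAt.hasFDerivAt.restrictScalars ℝ

theorem fderiv_re_apply (hf : DifferentiableAt ℂ f z) (e : ℂ) :
    fderiv ℝ (fun w => (f w).re) z e = (e * deriv f z).re := by
  have := (Complex.reCLM.hasFDerivAt.comp z (hasFDerivAt_restrictScalars hf)).fderiv
  simp only [Function.comp_def, Complex.reCLM_apply] at this
  simp [this]

theorem fderiv_im_apply (hf : DifferentiableAt ℂ f z) (e : ℂ) :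
    fderiv ℝ (fun w => (f w).im) z e = (e * deriv f z).im := by
  have := (Complex.imCLM.hasFDerivAt.comp z (hasFDerivAt_restrictScalars hf)).fderiv
  simp only [Function.comp_def, Complex.imCLM_apply] at this
  simp [this]

theorem norm_sq_eq_re_sq_add_im_sq (w : ℂ) : ‖w‖ ^ 2 = w.re ^ 2 + w.im ^ 2 := by
  rw [Complex.sq_norm, Complex.normSq_apply]; ring

theorem contDiffAt_norm_sq (hf : AnalyticAt ℂ f z) {n : WithTop ℕ∞} :
    ContDiffAt ℝ n (fun w => ‖f w‖ ^ 2) z :=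
  (hf.contDiffAt.restrict_scalars ℝ).norm_sq ℝ

theorem lap_norm_sq (hf : AnalyticAt ℂ f z) :
    lap (fun w => ‖f w‖ ^ 2) z = 4 * ‖deriv f z‖ ^ 2 := by
  have hre := hf.harmonicAt_re
  have him := hf.harmonicAt_im
  simp only [norm_sq_eq_re_sq_add_im_sq]
  rw [lap_add (hre.1.pow 2) (him.1.pow 2), lap_sq hre.1, lap_sq him.1,
    lap_eq_zero_of_harmonicAt hre, lap_eq_zero_of_harmonicAt him]
  simp only [fderiv_re_apply hf.differentiableAt, fderiv_im_apply hf.differentiableAt]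
  simp
  ring

theorem gradient_norm_sq (hf : AnalyticAt ℂ f z) :
    fderiv ℝ (fun w => ‖f w‖ ^ 2) z 1 ^ 2 + fderiv ℝ (fun w => ‖f w‖ ^ 2) z Complex.I ^ 2 =
      4 * ‖f z‖ ^ 2 * ‖deriv f z‖ ^ 2 := by
  have hre := hf.harmonicAt_re.1.differentiableAt two_ne_zero
  have him := hf.harmonicAt_im.1.differentiableAt two_ne_zero
  have key (e : ℂ) : fderiv ℝ (fun w => ‖f w‖ ^ 2) z e =
      2 * (f z).re * (e * deriv f z).re + 2 * (f z).im * (e * deriv f z).im := by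
    simp only [norm_sq_eq_re_sq_add_im_sq]
    rw [fderiv_fun_add (hre.fun_pow 2) (him.fun_pow 2), _root_.add_apply, fderiv_sq_apply hre,
      fderiv_sq_apply him, fderiv_re_apply hf.differentiableAt, fderiv_im_apply hf.differentiableAt]
  rw [key, key]
  simp [norm_sq_eq_re_sq_add_im_sq]
  ring

end Laplacian

section SmoothedNormPow

/-- The smooth approximation `(|f|² + ε)^{p/2}` of `|f|^p`, decreasing to it as `ε → 0⁺`. -/
def smoothedNormPow (p ε : ℝ) (f : ℂ → ℂ) (z : ℂ) : ℝ := (‖f z‖ ^ 2 + ε) ^ (p / 2)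

variable {p ε : ℝ} {f : ℂ → ℂ} {z : ℂ}

theorem contDiffAt_smoothedNormPow (hε : 0 < ε) (hf : AnalyticAt ℂ f z) :
    ContDiffAt ℝ 2 (smoothedNormPow p ε f) z :=
  ((contDiffAt_norm_sq hf).add contDiffAt_const).rpow_const_of_ne (by positivity)

theorem hasDerivAt_add_rpow {t : ℝ} (ht : 0 < t + ε) (q : ℝ) :
    HasDerivAt (fun t => (t + ε) ^ q) (q * (t + ε) ^ (q - 1)) t := by
  simpa using ((hasDerivAt_id t).add_const ε).rpow_const (p := q) (Or.inl ht.ne')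

theorem lap_smoothedNormPow (hε : 0 < ε) (hf : AnalyticAt ℂ f z) :
    lap (smoothedNormPow p ε f) z =
      2 * p * (‖f z‖ ^ 2 + ε) ^ (p / 2 - 2) * ‖deriv f z‖ ^ 2 * (p / 2 * ‖f z‖ ^ 2 + ε) := by
  have hpos : 0 < ‖f z‖ ^ 2 + ε := by positivity
  have hev : ∀ᶠ t in 𝓝 (‖f z‖ ^ 2), 0 < t + ε :=
    (by fun_prop : Continuous fun t : ℝ => t + ε).continuousAt.eventually (lt_mem_nhds hpos)
  have hlap := lap_comp (contDiffAt_norm_sq hf)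
    (hev.mono fun t ht => hasDerivAt_add_rpow ht (p / 2))
    ((hasDerivAt_add_rpow hpos (p / 2 - 1)).const_mul (p / 2))
  rw [gradient_norm_sq hf, lap_norm_sq hf, show p / 2 - 1 - 1 = p / 2 - 2 by ring,
    show p / 2 - 1 = p / 2 - 2 + 1 by ring, Real.rpow_add_one hpos.ne'] at hlap
  refine hlap.trans ?_
  ring

theorem lap_smoothedNormPow_nonneg (hp : 0 ≤ p) (hε : 0 < ε) (hf : AnalyticAt ℂ f z) :
    0 ≤ lap (smoothedNormPow p ε f) z := by
  rw [lap_smoothedNormPow hε hf]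
  positivity

end SmoothedNormPow

section SmoothPosPart

/-- A smooth convex approximation of the positive part `max t 0`: it vanishes for `t ≤ 0`, has
slope in `[0, 1]`, and slope `1` for `t ≥ η`. -/
def smoothPosPart (η t : ℝ) : ℝ := ∫ s in (0 : ℝ)..t, Real.smoothTransition (s / η)

variable {η t : ℝ}

theorem contDiff_smoothTransition_div (η : ℝ) :
    ContDiff ℝ 1 fun s => Real.smoothTransition (s / η) :=
  Real.smoothTransition.contDiff.comp (contDiff_id.div_const η)

theorem hasDerivAt_smoothPosPart (η t : ℝ) :
    HasDerivAt (smoothPosPart η) (Real.smoothTransition (t / η)) t :=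
  (contDiff_smoothTransition_div η).continuous.integral_hasStrictDerivAt 0 t |>.hasDerivAt

theorem contDiff_smoothPosPart (η : ℝ) : ContDiff ℝ 2 (smoothPosPart η) := by
  rw [show (2 : WithTop ℕ∞) = 1 + 1 by norm_num, contDiff_succ_iff_deriv,
    funext fun t => (hasDerivAt_smoothPosPart η t).deriv]
  exact ⟨fun t => (hasDerivAt_smoothPosPart η t).differentiableAt, by simp,
    contDiff_smoothTransition_div η⟩

theorem smoothPosPart_of_nonpos (hη : 0 ≤ η) (ht : t ≤ 0) : smoothPosPart η t = 0 := by
  refine intervalIntegral.integral_zero_ae (Eventually.of_forall fun s hs => ?_)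
  rw [uIoc_of_ge ht] at hs
  exact Real.smoothTransition.zero_of_nonpos (div_nonpos_of_nonpos_of_nonneg hs.2 hη)

theorem smoothPosPart_nonneg (hη : 0 ≤ η) (t : ℝ) : 0 ≤ smoothPosPart η t := by
  rcases le_total t 0 with ht | ht
  · rw [smoothPosPart_of_nonpos hη ht]
  · exact intervalIntegral.integral_nonneg ht fun s _ => Real.smoothTransition.nonneg _

theorem sub_le_smoothPosPart (hη : 0 < η) (t : ℝ) : t - η ≤ smoothPosPart η t := by
  rcases le_total t η with ht | ht
  · exact (sub_nonpos.2 ht).trans (smoothPosPart_nonneg hη.le t)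
  · have hint (a b : ℝ) := (contDiff_smoothTransition_div η).continuous.intervalIntegrable
      (μ := volume) a b
    have h_one : ∫ s in η..t, Real.smoothTransition (s / η) = t - η := by
      rw [intervalIntegral.integral_congr (g := fun _ => (1 : ℝ)) fun s hs => ?_]
      · simp
      · rw [uIcc_of_le ht] at hs
        exact Real.smoothTransition.one_of_one_le ((one_le_div hη).2 hs.1)
    rw [smoothPosPart, ← intervalIntegral.integral_add_adjacent_intervals (hint 0 η) (hint η t),
      h_one]
    exact le_add_of_nonneg_left (smoothPosPart_nonneg hη.le η)

theorem lap_add_smoothPosPart_nonneg (hη : 0 ≤ η) {φ h : ℂ → ℝ} {z : ℂ}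
    (hφ : ContDiffAt ℝ 2 φ z) (hh : ContDiffAt ℝ 2 h z) (hφ0 : 0 ≤ lap φ z) (hh0 : 0 ≤ lap h z) :
    0 ≤ lap (fun w => φ w + smoothPosPart η (h w - φ w)) z := by
  have hd : ContDiffAt ℝ 2 (fun w => h w - φ w) z := hh.sub hφ
  have hk := ((contDiff_smoothTransition_div η).differentiable one_ne_zero (h z - φ z)).hasDerivAt
  have hkd : ContDiffAt ℝ 2 (fun w => smoothPosPart η (h w - φ w)) z :=
    (contDiff_smoothPosPart η).contDiffAt.comp z hd
  rw [lap_add hφ hkd, lap_comp hd (Eventually.of_forall (hasDerivAt_smoothPosPart η)) hk,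
    lap_sub hh hφ]
  have hslope0 := Real.smoothTransition.nonneg ((h z - φ z) / η)
  have hslope1 := Real.smoothTransition.le_one ((h z - φ z) / η)
  have hconv : 0 ≤ deriv (fun s => Real.smoothTransition (s / η)) (h z - φ z) :=
    (Real.smoothTransition.monotone.comp (monotone_id.div_const hη)).deriv_nonneg
  nlinarith [mul_nonneg hconv (add_nonneg (sq_nonneg (fderiv ℝ (fun w => h w - φ w) z 1))
    (sq_nonneg (fderiv ℝ (fun w => h w - φ w) z Complex.I))),
    mul_nonneg (sub_nonneg.2 hslope1) hφ0, mul_nonneg hslope0 hh0]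

end SmoothPosPart

/-! ### Conformal charts -/

section ConformalChart

variable {ψ G : ℂ → ℂ} {U Ω : Set ℂ} {w : ℂ}

theorem not_eventually_const_of_injOn (hU : U ∈ 𝓝 w) (hinj : InjOn ψ U) :
    ¬ ∀ᶠ y in 𝓝 w, ψ y = ψ w := by
  intro h
  have : ∀ᶠ y in 𝓝[≠] w, y = w := nhdsWithin_le_nhds <| by
    filter_upwards [h, hU] with y hy hyU using hinj hyU (mem_of_mem_nhds hU) hy
  obtain ⟨y, hyw, hy⟩ := (this.and self_mem_nhdsWithin).exists
  exact hy hyw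

theorem nhds_le_map_nhds_of_injOn (hψ : AnalyticAt ℂ ψ w) (hU : U ∈ 𝓝 w) (hinj : InjOn ψ U) :
    𝓝 (ψ w) ≤ map ψ (𝓝 w) :=
  hψ.eventually_constant_or_nhds_le_map_nhds.resolve_left (not_eventually_const_of_injOn hU hinj)

theorem continuousAt_of_leftInvOn (hψ : AnalyticAt ℂ ψ w) (hU : U ∈ 𝓝 w) (hG : LeftInvOn G ψ U) :
    ContinuousAt G (ψ w) := by
  rw [ContinuousAt, hG (mem_of_mem_nhds hU)]
  refine (map_mono (nhds_le_map_nhds_of_injOn hψ hU hG.injOn)).trans ?_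
  have hid : G ∘ ψ =ᶠ[𝓝 w] id := mem_of_superset hU fun y hy => hG hy
  rw [Filter.map_map, Filter.map_congr hid, Filter.map_id]

theorem eventually_deriv_ne_zero_of_injOn (hψ : AnalyticAt ℂ ψ w) (hU : U ∈ 𝓝 w)
    (hinj : InjOn ψ U) : ∀ᶠ y in 𝓝[≠] w, deriv ψ y ≠ 0 := by
  refine hψ.deriv.eventually_eq_zero_or_eventually_ne_zero.resolve_left fun h => ?_
  obtain ⟨ε, hε, hball⟩ := Metric.eventually_nhds_iff_ball.1 (h.and hψ.eventually_analyticAt)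
  refine not_eventually_const_of_injOn hU hinj (mem_of_superset (ball_mem_nhds w hε) fun y hy => ?_)
  exact isOpen_ball.is_const_of_deriv_eq_zero (convex_ball w ε).isPreconnected
    (fun x hx => (hball x hx).2.differentiableAt.differentiableWithinAt)
    (fun x hx => (hball x hx).1) hy (mem_ball_self hε)

/-- Off the isolated zeros of `deriv ψ` this is the inverse function theorem, and those zeros are
removable singularities of the continuous function `G`. -/
theorem differentiableAt_of_leftInvOn (hU : IsOpen U) (hψ : DifferentiableOn ℂ ψ U)
    (hG : LeftInvOn G ψ U) (hw : w ∈ U) : DifferentiableAt ℂ G (ψ w) := by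
  have hψa : AnalyticOnNhd ℂ ψ U := hψ.analyticOnNhd hU
  have hinv : ∀ᶠ z in 𝓝 (ψ w), G z ∈ U ∧ ψ (G z) = z :=
    nhds_le_map_nhds_of_injOn (hψa w hw) (hU.mem_nhds hw) hG.injOn <|
      (hU.eventually_mem hw).mono fun y hy => by simpa [hG hy] using hy
  have hcont := continuousAt_of_leftInvOn (hψa w hw) (hU.mem_nhds hw) hG
  have hGw : Tendsto G (𝓝[≠] ψ w) (𝓝[≠] w) := by
    refine tendsto_nhdsWithin_iff.2 ⟨?_, ?_⟩
    · simpa [ContinuousAt, hG hw] using hcont.tendsto.mono_left nhdsWithin_le_nhds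
    · filter_upwards [self_mem_nhdsWithin, nhdsWithin_le_nhds hinv] with z hz hinvz hGz
      exact hz (hinvz.2 ▸ congrArg ψ hGz)
  have hne := hGw.eventually
    (eventually_deriv_ne_zero_of_injOn (hψa w hw) (hU.mem_nhds hw) hG.injOn)
  refine (analyticAt_of_differentiable_on_punctured_nhds_of_continuousAt ?_ hcont).differentiableAt
  filter_upwards [hne, nhdsWithin_le_nhds hinv.eventually_nhds] with z hz hinvz
  obtain ⟨hGz, hψG⟩ := hinvz.self_of_nhds
  have hGcont : ContinuousAt G z :=
    hψG ▸ continuousAt_of_leftInvOn (hψa _ hGz) (hU.mem_nhds hGz) hG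
  exact ((hψa _ hGz).differentiableAt.hasDerivAt.of_local_left_inverse hGcont hz
    (hinvz.mono fun _ h => h.2)).differentiableAt

/-- `ψ` maps the unit disc conformally onto the open set `Ω`, with inverse `G`. -/
structure IsConformalChart (Ω : Set ℂ) (ψ G : ℂ → ℂ) : Prop where
  isOpen : IsOpen Ω
  differentiableOn : DifferentiableOn ℂ ψ (ball 0 1)
  mapsTo : MapsTo ψ (ball 0 1) Ω
  differentiableOn_inv : DifferentiableOn ℂ G Ω
  mapsTo_inv : MapsTo G Ω (ball 0 1)
  leftInvOn : LeftInvOn G ψ (ball 0 1)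
  rightInvOn : RightInvOn G ψ Ω

theorem isConformalChart_invFunOn (hψ : DifferentiableOn ℂ ψ (ball 0 1))
    (hinj : InjOn ψ (ball 0 1)) :
    IsConformalChart (ψ '' ball 0 1) ψ (Function.invFunOn ψ (ball 0 1)) where
  isOpen := isOpen_iff_mem_nhds.2 <| forall_mem_image.2 fun w hw =>
    nhds_le_map_nhds_of_injOn ((hψ.analyticOnNhd isOpen_ball) w hw) (isOpen_ball.mem_nhds hw) hinj
      (image_mem_map (isOpen_ball.mem_nhds hw))
  differentiableOn := hψ
  mapsTo := mapsTo_image _ _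
  differentiableOn_inv := forall_mem_image.2 fun _ hw =>
    (differentiableAt_of_leftInvOn isOpen_ball hψ hinj.leftInvOn_invFunOn
      hw).differentiableWithinAt
  mapsTo_inv := fun _ hz => Function.invFunOn_mem hz
  leftInvOn := hinj.leftInvOn_invFunOn
  rightInvOn := fun _ hz => Function.invFunOn_eq hz

open InnerProductSpace

theorem harmonicAt_comp_analyticAt {h : ℂ → ℝ} (hh : HarmonicAt h (ψ w)) (hψ : AnalyticAt ℂ ψ w) :
    HarmonicAt (h ∘ ψ) w := by
  obtain ⟨ε, hε, hball⟩ := Metric.eventually_nhds_iff_ball.1 hh.eventually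
  obtain ⟨F, hF, hFh⟩ := HarmonicOnNhd.exists_analyticOnNhd_ball_re_eq hball
  refine (harmonicAt_congr_nhds ?_).1 ((hF _ (mem_ball_self hε)).comp hψ).harmonicAt_re
  filter_upwards [hψ.continuousAt.preimage_mem_nhds (ball_mem_nhds _ hε)] with y hy using hFh hy

theorem IsConformalChart.exists_re_eq (hc : IsConformalChart Ω ψ G) {h : ℂ → ℝ}
    (hh : HarmonicOn h Ω) :
    ∃ P : ℂ → ℂ, AnalyticOnNhd ℂ P (ball 0 1) ∧ ∀ w ∈ ball (0 : ℂ) 1, (P w).re = h (ψ w) :=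
  HarmonicOnNhd.exists_analyticOnNhd_ball_re_eq fun w hw => harmonicAt_comp_analyticAt
    ((harmonicOn_iff_harmonicOnNhd hc.isOpen).1 hh _ (hc.mapsTo hw))
    (hc.differentiableOn.analyticOnNhd isOpen_ball w hw)

end ConformalChart

/-! ### Harmonic functions on discs -/

section Disc

open InnerProductSpace

variable {h : ℂ → ℝ} {c w : ℂ} {ρ : ℝ}

theorem continuousOn_poissonKernel_sphere (hw : w ∈ ball c ρ) :
    ContinuousOn (poissonKernel c w) (sphere c ρ) := by
  rw [poissonKernel_eq_re_herglotzRieszKernel, ← abs_of_pos (pos_of_mem_ball hw)]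
  exact Complex.continuous_re.comp_continuousOn (continuousOn_herglotzRieszKernel_sphere hw)

theorem circleAverage_eq_of_harmonicOnNhd (hρ : 0 ≤ ρ) (hh : HarmonicOnNhd h (closedBall c ρ)) :
    Real.circleAverage h c ρ = h c :=
  InnerProductSpace.HarmonicOnNhd.circleAverage_eq (by rwa [abs_of_nonneg hρ])

theorem harnack_le (hh : HarmonicOnNhd h (closedBall c ρ)) (h0 : ∀ x ∈ sphere c ρ, 0 ≤ h x)
    (hw : w ∈ ball c ρ) : (ρ - ‖w - c‖) / (ρ + ‖w - c‖) * h c ≤ h w := by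
  have hρ : |ρ| = ρ := abs_of_pos (pos_of_mem_ball hw)
  have hcont : ContinuousOn h (sphere c |ρ|) := by
    rw [hρ]; exact hh.continuousOn.mono sphere_subset_closedBall
  rw [← hh.circleAverage_poissonKernel_smul hw,
    ← circleAverage_eq_of_harmonicOnNhd (pos_of_mem_ball hw).le hh, ← smul_eq_mul,
    ← Real.circleAverage_fun_smul]
  have hint (a : ℝ) : CircleIntegrable (fun x => a • h x) c ρ :=
    (hcont.const_smul a).circleIntegrable'
  refine Real.circleAverage_mono (hint _)
    ((hρ.symm ▸ continuousOn_poissonKernel_sphere hw).smul hcont).circleIntegrable' fun x hx => ?_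
  rw [hρ] at hx
  refine mul_le_mul_of_nonneg_right ?_ (h0 x hx)
  rw [poissonKernel_eq_re_herglotzRieszKernel]
  exact le_re_herglotzRieszKernel hx hw

theorem nonneg_of_nonneg_sphere (hh : HarmonicOnNhd h (closedBall c ρ))
    (h0 : ∀ x ∈ sphere c ρ, 0 ≤ h x) (hw : w ∈ ball c ρ) : 0 ≤ h w := by
  have hρ : 0 < ρ := pos_of_mem_ball hw
  have hw' : ‖w - c‖ < ρ := mem_ball_iff_norm.1 hw
  have hc : 0 ≤ h c := by
    rw [← circleAverage_eq_of_harmonicOnNhd hρ.le hh]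
    exact Real.circleAverage_nonneg_of_nonneg fun x hx => h0 x (abs_of_pos hρ ▸ hx)
  exact (mul_nonneg (div_nonneg (sub_nonneg.2 hw'.le) (by positivity)) hc).trans
    (harnack_le hh h0 hw)

theorem rpow_add_mul_sub_le_rpow {p a x : ℝ} (hp : 1 ≤ p) (ha : 0 ≤ a) (hx : 0 ≤ x) :
    a ^ p + p * a ^ (p - 1) * (x - a) ≤ x ^ p := by
  have hderiv := Real.hasDerivAt_rpow_const (x := a) (Or.inr hp)
  have hconv := convexOn_rpow hp
  rcases lt_trichotomy a x with h | rfl | h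
  · have := hconv.le_slope_of_hasDerivAt ha hx h hderiv
    rw [slope_def_field, le_div_iff₀ (sub_pos.2 h)] at this
    linarith
  · simp
  · have := hconv.slope_le_of_hasDerivAt hx ha h hderiv
    rw [slope_def_field, div_le_iff₀ (sub_pos.2 h)] at this
    linarith

theorem exists_norm_eq_one_mul_eq_norm (z : ℂ) : ∃ c : ℂ, ‖c‖ = 1 ∧ c * z = ‖z‖ := by
  rcases eq_or_ne z 0 with rfl | hz
  · exact ⟨1, by simp⟩
  · exact ⟨‖z‖ / z, by simp [hz], div_mul_cancel₀ _ hz⟩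

/-- The tangent to `x ↦ x ^ p` at `‖F w‖` turns `‖F‖ ^ p` into a harmonic minorant which agrees
with it at `w`, so that the minimum principle applies. -/
theorem norm_rpow_le_of_le_sphere {F : ℂ → ℂ} {p : ℝ} (hp : 1 ≤ p)
    (hF : AnalyticOnNhd ℂ F (closedBall c ρ)) (hh : HarmonicOnNhd h (closedBall c ρ))
    (hle : ∀ x ∈ sphere c ρ, ‖F x‖ ^ p ≤ h x) (hw : w ∈ ball c ρ) : ‖F w‖ ^ p ≤ h w := by
  obtain ⟨b, hb, hbF⟩ := exists_norm_eq_one_mul_eq_norm (F w)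
  set a := ‖F w‖
  have hL : HarmonicOnNhd
      (fun x => (((a ^ p : ℝ) : ℂ) + (p * a ^ (p - 1) : ℝ) * (b * F x - a)).re)
      (closedBall c ρ) := fun x hx =>
    (analyticAt_const.add (analyticAt_const.mul
      ((analyticAt_const.mul (hF x hx)).sub analyticAt_const))).harmonicAt_re
  have hLle (x : ℂ) : a ^ p + p * a ^ (p - 1) * ((b * F x).re - a) ≤ ‖F x‖ ^ p := by
    have hre : (b * F x).re ≤ ‖F x‖ := (Complex.re_le_norm _).trans (by simp [hb])
    refine le_trans ?_ (rpow_add_mul_sub_le_rpow hp (norm_nonneg (F w)) (norm_nonneg (F x)))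
    gcongr
  have hmin := nonneg_of_nonneg_sphere (hh.sub hL) (fun x hx => ?_) hw
  · have hbF' : b * F w = a := hbF
    simpa only [Pi.sub_apply, hbF', sub_self, mul_zero, add_zero, ofReal_re, sub_nonneg] using hmin
  · simpa [re_ofReal_mul] using (hLle x).trans (hle x hx)

end Disc

section TrigonometricApproximation

open scoped ComplexConjugate

theorem exists_add_conj_eq_of_mem_span_fourier {τ : C(AddCircle (1 : ℝ), ℂ)}
    (hτ : τ ∈ Submodule.span ℂ (range (@fourier (1 : ℝ)))) :
    ∃ P Q : ℂ → ℂ, Differentiable ℂ P ∧ Differentiable ℂ Q ∧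
      ∀ θ, τ θ = P θ.toCircle + conj (Q θ.toCircle) := by
  induction hτ using Submodule.span_induction with
  | mem _ hx =>
    obtain ⟨n | n, rfl⟩ := hx
    · refine ⟨fun z => z ^ n, 0, by fun_prop, differentiable_const _, fun θ => ?_⟩
      rw [fourier_apply, AddCircle.toCircle_zsmul]
      simp
    · refine ⟨0, fun z => z ^ (n + 1), differentiable_const _, by fun_prop, fun θ => ?_⟩
      rw [fourier_apply, AddCircle.toCircle_zsmul, zpow_negSucc, Circle.coe_inv_eq_conj]
      simp
  | zero => exact ⟨0, 0, differentiable_const _, differentiable_const _, fun θ => by simp⟩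
  | add _ _ _ _ hx hy =>
    obtain ⟨P, Q, hP, hQ, h⟩ := hx
    obtain ⟨P', Q', hP', hQ', h'⟩ := hy
    exact ⟨P + P', Q + Q', hP.add hP', hQ.add hQ', fun θ => by simp [h, h']; ring⟩
  | smul a _ _ hx =>
    obtain ⟨P, Q, hP, hQ, h⟩ := hx
    exact ⟨fun z => a * P z, fun z => conj a * Q z, hP.const_mul _, hQ.const_mul _,
      fun θ => by simp [h, mul_add]⟩

theorem exists_entire_abs_re_sub_lt_circle (g : C(Circle, ℝ)) {δ : ℝ} (hδ : 0 < δ) :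
    ∃ P : ℂ → ℂ, Differentiable ℂ P ∧ ∀ e : Circle, |(P e).re - g e| < δ := by
  have : Fact ((0 : ℝ) < 1) := ⟨one_pos⟩
  let e := AddCircle.homeomorphCircle (T := (1 : ℝ)) one_ne_zero
  let g' : C(AddCircle (1 : ℝ), ℂ) := ⟨fun θ => (g (e θ) : ℂ), by fun_prop⟩
  have hmem : g' ∈ (Submodule.span ℂ (range (@fourier (1 : ℝ)))).topologicalClosure :=
    span_fourier_closure_eq_top (T := 1) ▸ Submodule.mem_top
  obtain ⟨τ, hτ, hd⟩ := Metric.mem_closure_iff.1 hmem δ hδ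
  obtain ⟨P, Q, hP, hQ, hPQ⟩ := exists_add_conj_eq_of_mem_span_fourier hτ
  refine ⟨P + Q, hP.add hQ, e.surjective.forall.2 fun θ => ?_⟩
  have hre : ((P + Q) (e θ) : ℂ).re - g (e θ) = (τ θ - g' θ).re := by
    simp [hPQ, g', e, AddCircle.homeomorphCircle_apply]
  rw [hre]
  refine (Complex.abs_re_le_norm _).trans_lt ?_
  rw [← dist_eq_norm, dist_comm]
  exact (ContinuousMap.dist_apply_le_dist θ).trans_lt hd

theorem exists_entire_abs_re_sub_lt_sphere {g : ℂ → ℝ} {ρ δ : ℝ} (hρ : 0 < ρ)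
    (hg : ContinuousOn g (sphere 0 ρ)) (hδ : 0 < δ) :
    ∃ P : ℂ → ℂ, Differentiable ℂ P ∧ ∀ w ∈ sphere (0 : ℂ) ρ, |(P w).re - g w| < δ := by
  obtain ⟨P, hP, hPg⟩ := exists_entire_abs_re_sub_lt_circle
    ⟨fun e => g (ρ * e), hg.comp_continuous (by fun_prop) fun e => by
      simp [abs_of_pos hρ, e.norm_coe]⟩ hδ
  refine ⟨fun z => P (z / ρ), by fun_prop, fun w hw => ?_⟩
  have hρ' : (ρ : ℂ) ≠ 0 := ofReal_ne_zero.2 hρ.ne'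
  have hwρ : w / ρ ∈ Submonoid.unitSphere ℂ := mem_sphere_zero_iff_norm.2 <| by
    rw [norm_div, mem_sphere_zero_iff_norm.1 hw, norm_real, Real.norm_of_nonneg hρ.le,
      div_self hρ.ne']
  simpa [mul_div_cancel₀ _ hρ'] using hPg ⟨w / ρ, hwρ⟩

theorem exists_entire_re_mem_Ioo_sphere {g : ℂ → ℝ} {ρ δ : ℝ} (hρ : 0 < ρ)
    (hg : ContinuousOn g (sphere 0 ρ)) (hδ : 0 < δ) :
    ∃ P : ℂ → ℂ, Differentiable ℂ P ∧ (P 0).im = 0 ∧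
      ∀ w ∈ sphere (0 : ℂ) ρ, (P w).re ∈ Ioo (g w) (g w + δ) := by
  obtain ⟨P, hP, hPg⟩ := exists_entire_abs_re_sub_lt_sphere hρ hg (half_pos hδ)
  refine ⟨fun w => P w + ((δ / 2 : ℝ) - (P 0).im * I), hP.add_const _, by simp, fun w hw => ?_⟩
  obtain ⟨hlower, hupper⟩ := abs_lt.1 (hPg w hw)
  have hre : (P w + ((δ / 2 : ℝ) - (P 0).im * I)).re = (P w).re + δ / 2 := by simp
  rw [hre]
  constructor <;> linarith

end TrigonometricApproximation

/-! ### Monge–Ampère measures -/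

section Cutoff

variable {Ω L L' : Set ℂ} {χ Ψ φ : ℂ → ℝ} {m : Measure ℂ} {z : ℂ}

/-- `χ` is a cutoff function for `L` in `Ω`: a compactly supported `C²` function on `Ω` with values
in `[0, 1]` which equals `1` on `L`. -/
structure IsCutoff (Ω L : Set ℂ) (χ : ℂ → ℝ) : Prop where
  contDiff : ContDiff ℝ 2 χ
  hasCompactSupport : HasCompactSupport χ
  tsupport_subset : tsupport χ ⊆ Ω
  nonneg : ∀ z, 0 ≤ χ z
  le_one : ∀ z, χ z ≤ 1
  eq_one : ∀ z ∈ L, χ z = 1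

theorem exists_isCutoff (hΩ : IsOpen Ω) (hL : IsCompact L) (hLΩ : L ⊆ Ω) :
    ∃ χ, IsCutoff Ω L χ := by
  obtain ⟨K, hK, hLK, hKΩ⟩ := exists_compact_between hL hΩ hLΩ
  obtain ⟨χ, hone, hzero, hIcc⟩ := exists_contMDiffMap_one_nhds_of_subset_interior (n := (2 : ℕ∞))
    (I := modelWithCornersSelf ℝ ℂ) hL.isClosed hLK
  have hsupp : tsupport χ ⊆ K :=
    closure_minimal (fun x hx => of_not_not fun h => hx (hzero x h)) hK.isClosed
  exact ⟨χ, χ.contMDiff.contDiff, hK.of_isClosed_subset (isClosed_tsupport χ) hsupp,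
    hsupp.trans hKΩ, fun z => (hIcc z).1, fun z => (hIcc z).2,
    fun z hz => hone.self_of_nhdsSet z hz⟩

namespace IsCutoff

theorem mono (hχ : IsCutoff Ω L χ) (hL : L' ⊆ L) : IsCutoff Ω L' χ :=
  { hχ with eq_one := fun z hz => hχ.eq_one z (hL hz) }

theorem subset_tsupport (hχ : IsCutoff Ω L χ) : L ⊆ tsupport χ := fun z hz =>
  subset_closure (by rw [Function.mem_support, hχ.eq_one z hz]; exact one_ne_zero)

theorem eq_zero (hχ : IsCutoff Ω L χ) (hz : z ∉ Ω) : χ z = 0 :=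
  image_eq_zero_of_notMem_tsupport fun h => hz (hχ.tsupport_subset h)

theorem contDiff_mul (hχ : IsCutoff Ω L χ) (hΩ : IsOpen Ω) (hΨ : ContDiffOn ℝ 2 Ψ Ω) :
    ContDiff ℝ 2 fun z => χ z * Ψ z := by
  refine contDiff_iff_contDiffAt.2 fun z => ?_
  by_cases hz : z ∈ Ω
  · exact hχ.contDiff.contDiffAt.mul (hΨ.contDiffAt (hΩ.mem_nhds hz))
  · have hχz : χ =ᶠ[𝓝 z] 0 :=
      notMem_tsupport_iff_eventuallyEq.1 fun h => hz (hχ.tsupport_subset h)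
    refine (contDiffAt_const (c := (0 : ℝ))).congr_of_eventuallyEq ?_
    filter_upwards [hχz] with y hy
    rw [hy, Pi.zero_apply, zero_mul]

theorem tsupport_mul_subset (hχ : IsCutoff Ω L χ) : tsupport (fun z => χ z * Ψ z) ⊆ Ω :=
  tsupport_mul_subset_left.trans hχ.tsupport_subset

theorem integrable_mul [IsFiniteMeasure m] (hχ : IsCutoff Ω L χ) (hΩ : IsOpen Ω)
    (hΨ : ContDiffOn ℝ 2 Ψ Ω) : Integrable (fun z => χ z * Ψ z) m :=
  (hχ.contDiff_mul hΩ hΨ).continuous.integrable_of_hasCompactSupport hχ.hasCompactSupport.mul_right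

theorem integrable [IsFiniteMeasure m] (hχ : IsCutoff Ω L χ) : Integrable χ m :=
  hχ.contDiff.continuous.integrable_of_hasCompactSupport hχ.hasCompactSupport

theorem measure_le_ofReal_integral (hχ : IsCutoff Ω L χ) (hint : Integrable χ m) :
    m L ≤ ENNReal.ofReal (∫ z, χ z ∂m) := by
  rw [ofReal_integral_eq_lintegral_ofReal hint (ae_of_all _ hχ.nonneg)]
  calc m L ≤ m {z | 1 ≤ ENNReal.ofReal (χ z)} :=
        measure_mono fun z hz => by simp [hχ.eq_one z hz]
    _ ≤ ∫⁻ z, ENNReal.ofReal (χ z) ∂m := by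
        simpa using mul_meas_ge_le_lintegral
          hχ.contDiff.continuous.measurable.ennreal_ofReal 1 (μ := m)

theorem ofReal_integral_le_measure [IsFiniteMeasure m] (hχ : IsCutoff Ω L χ) :
    ENNReal.ofReal (∫ z, χ z ∂m) ≤ m univ := by
  rw [ofReal_integral_eq_lintegral_ofReal hχ.integrable (ae_of_all _ hχ.nonneg)]
  calc ∫⁻ z, ENNReal.ofReal (χ z) ∂m ≤ ∫⁻ _, 1 ∂m :=
        lintegral_mono fun z => ENNReal.ofReal_le_one.2 (hχ.le_one z)
    _ = m univ := lintegral_one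

end IsCutoff

theorem contDiff_fderiv_apply (hφ : ContDiff ℝ 2 φ) (e : ℂ) :
    ContDiff ℝ 1 fun w => fderiv ℝ φ w e :=
  (hφ.fderiv_right (m := 1) (by norm_num)).clm_apply contDiff_const

theorem continuous_fderiv_fderiv_apply (hφ : ContDiff ℝ 2 φ) (e : ℂ) :
    Continuous fun z => fderiv ℝ (fun w => fderiv ℝ φ w e) z e :=
  ((contDiff_fderiv_apply hφ e).continuous_fderiv one_ne_zero).clm_apply continuous_const

theorem continuous_lap (hφ : ContDiff ℝ 2 φ) : Continuous (lap φ) :=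
  (continuous_fderiv_fderiv_apply hφ 1).add (continuous_fderiv_fderiv_apply hφ I)

theorem lap_const (c : ℝ) (z : ℂ) : lap (fun _ => c) z = 0 := by
  simp only [lap, fderiv_fun_const, Pi.zero_apply, _root_.zero_apply, add_zero]

theorem lap_eq_zero_of_notMem_tsupport (hz : z ∉ tsupport φ) : lap φ z = 0 :=
  (lap_congr (notMem_tsupport_iff_eventuallyEq.1 hz)).trans (lap_const 0 z)

theorem integrableOn_mul_lap {v : ℂ → ℝ} (hΩ : IsOpen Ω) (hv : ContinuousOn v Ω)
    (hφ : ContDiff ℝ 2 φ) (hcpt : HasCompactSupport φ) (hsupp : tsupport φ ⊆ Ω) :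
    IntegrableOn (fun z => v z * lap φ z) Ω := by
  have hint : IntegrableOn (fun z => v z * lap φ z) (tsupport φ) :=
    ((hv.mono hsupp).mul (continuous_lap hφ).continuousOn).integrableOn_compact hcpt
  exact hint.of_forall_sdiff_eq_zero hΩ.measurableSet fun z hz => by
    rw [lap_eq_zero_of_notMem_tsupport hz.2, mul_zero]

theorem integral_fderiv_apply_eq_zero (hφ : ContDiff ℝ 1 φ) (hcpt : HasCompactSupport φ) (e : ℂ) :
    ∫ z, fderiv ℝ φ z e = 0 := by
  have hint : Integrable fun z => fderiv ℝ φ z e :=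
    ((hφ.continuous_fderiv one_ne_zero).clm_apply
      continuous_const).integrable_of_hasCompactSupport (hcpt.fderiv_apply ℝ e)
  have hparts := integral_mul_fderiv_eq_neg_fderiv_mul_of_integrable (μ := volume) (𝕜 := ℝ)
    (f := fun _ : ℂ => (1 : ℝ)) (g := φ) (v := e) (by simp) (by simpa using hint)
    (by simpa using hφ.continuous.integrable_of_hasCompactSupport hcpt)
    (fun _ _ => differentiableAt_const _) (fun x _ => hφ.differentiable one_ne_zero x)
  simpa using hparts

theorem integral_lap_eq_zero (hφ : ContDiff ℝ 2 φ) (hcpt : HasCompactSupport φ) :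
    ∫ z, lap φ z = 0 := by
  have hint (e : ℂ) : Integrable fun z => fderiv ℝ (fun w => fderiv ℝ φ w e) z e :=
    (continuous_fderiv_fderiv_apply hφ e).integrable_of_hasCompactSupport
      ((hcpt.fderiv_apply ℝ e).fderiv_apply ℝ e)
  have hzero (e : ℂ) := integral_fderiv_apply_eq_zero (contDiff_fderiv_apply hφ e)
    (hcpt.fderiv_apply ℝ e) e
  simp only [lap]
  rw [integral_add (hint 1) (hint I), hzero, hzero, add_zero]

end Cutoff

section RieszMeasure

variable {Ω U : Set ℂ} {u v χ Ψ : ℂ → ℝ} {ν ν' : Measure ℂ}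

theorem IsRieszMeasure.integral_cutoff_mul_eq (hν : IsRieszMeasure u Ω ν)
    (hν' : IsRieszMeasure v Ω ν') (hΩ : IsOpen Ω) (hu : ContinuousOn u Ω) (hv : ContinuousOn v Ω)
    (hU : IsOpen U) (heq : ∀ z ∈ Ω, z ∉ U → v z = u z) (hχ : IsCutoff Ω U χ)
    (hΨ : ContDiffOn ℝ 2 Ψ Ω) :
    ∫ z, χ z * Ψ z ∂ν' =
      ∫ z, χ z * Ψ z ∂ν + (4 : ℝ)⁻¹ * ∫ z in Ω, (v z - u z) * lap Ψ z := by
  have hcd := hχ.contDiff_mul hΩ hΨ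
  have hcpt : HasCompactSupport fun z => χ z * Ψ z := hχ.hasCompactSupport.mul_right
  have hsupp : tsupport (fun z => χ z * Ψ z) ⊆ Ω := hχ.tsupport_mul_subset
  rw [hν'.2 _ hcd hcpt hsupp, hν.2 _ hcd hcpt hsupp, ← sub_eq_iff_eq_add', ← mul_sub,
    ← integral_sub (integrableOn_mul_lap hΩ hv hcd hcpt hsupp)
      (integrableOn_mul_lap hΩ hu hcd hcpt hsupp)]
  congr 1
  refine setIntegral_congr_fun hΩ.measurableSet fun z hz => ?_
  simp only [← sub_mul]
  by_cases hzU : z ∈ U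
  · congr 1
    refine lap_congr ?_
    filter_upwards [hU.mem_nhds hzU] with y hy
    rw [hχ.eq_one y hy, one_mul]
  · rw [heq z hz hzU, sub_self, zero_mul, zero_mul]

theorem IsRieszMeasure.integral_cutoff_eq (hν : IsRieszMeasure u Ω ν)
    (hν' : IsRieszMeasure v Ω ν') (hΩ : IsOpen Ω) (hu : ContinuousOn u Ω) (hv : ContinuousOn v Ω)
    (hU : IsOpen U) (heq : ∀ z ∈ Ω, z ∉ U → v z = u z) (hχ : IsCutoff Ω U χ) :
    ∫ z, χ z ∂ν' = ∫ z, χ z ∂ν := by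
  simpa only [lap_const, mul_one, mul_zero, integral_zero, add_zero] using
    hν.integral_cutoff_mul_eq hν' hΩ hu hv hU heq hχ (Ψ := fun _ => 1) contDiffOn_const

theorem setIntegral_sub_pos (hΩ : IsOpen Ω) (hu : ContinuousOn u Ω) (hv : ContinuousOn v Ω)
    (hU : IsOpen U) (hne : U.Nonempty) (heq : ∀ z ∈ Ω, z ∉ U → v z = u z)
    (hlt : ∀ z ∈ U, u z < v z) (hχ : IsCutoff Ω U χ) : 0 < ∫ z in Ω, (v z - u z) := by
  have hUΩ : U ⊆ Ω := hχ.subset_tsupport.trans hχ.tsupport_subset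
  have hnonneg : ∀ z ∈ Ω, 0 ≤ v z - u z := fun z hz => by
    by_cases hzU : z ∈ U
    · exact (sub_pos.2 (hlt z hzU)).le
    · rw [heq z hz hzU, sub_self]
  have hint : IntegrableOn (fun z => v z - u z) Ω :=
    (((hv.sub hu).mono hχ.tsupport_subset).integrableOn_compact
      hχ.hasCompactSupport).of_forall_sdiff_eq_zero hΩ.measurableSet fun z hz => by
        exact sub_eq_zero.2 (heq z hz.1 fun h => hz.2 (hχ.subset_tsupport h))
  rw [setIntegral_pos_iff_support_of_nonneg_ae (ae_restrict_of_forall_mem hΩ.measurableSet hnonneg)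
    hint]
  exact (hU.measure_pos volume hne).trans_le
    (measure_mono fun z hz => ⟨(sub_pos.2 (hlt z hz)).ne', hUΩ hz⟩)

theorem contDiff_one_add_norm_sq : ContDiff ℝ 2 fun z : ℂ => 1 + ‖z‖ ^ 2 :=
  contDiff_const.add (contDiff_norm_sq ℝ)

theorem lap_one_add_norm_sq (z : ℂ) : lap (fun w : ℂ => 1 + ‖w‖ ^ 2) z = 4 := by
  have hnorm := lap_norm_sq (f := id) (z := z) analyticAt_id
  rw [deriv_id, norm_one] at hnorm
  rw [lap_add contDiffAt_const (contDiff_norm_sq ℝ).contDiffAt, lap_const, zero_add]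
  exact hnorm.trans (by norm_num)

theorem IsRieszMeasure.integral_cutoff_mul_lt (hν : IsRieszMeasure u Ω ν)
    (hν' : IsRieszMeasure v Ω ν') (hΩ : IsOpen Ω) (hu : ContinuousOn u Ω) (hv : ContinuousOn v Ω)
    (hU : IsOpen U) (hne : U.Nonempty) (heq : ∀ z ∈ Ω, z ∉ U → v z = u z)
    (hlt : ∀ z ∈ U, u z < v z) (hχ : IsCutoff Ω U χ) :
    ∫ z, χ z * (1 + ‖z‖ ^ 2) ∂ν < ∫ z, χ z * (1 + ‖z‖ ^ 2) ∂ν' := by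
  rw [hν.integral_cutoff_mul_eq hν' hΩ hu hv hU heq hχ contDiff_one_add_norm_sq.contDiffOn]
  simp only [lap_one_add_norm_sq]
  rw [integral_mul_const]
  linarith [setIntegral_sub_pos hΩ hu hv hU hne heq hlt hχ]

/- A Riesz measure is only tested through Bochner integrals, which are `0` for non-integrable
functions. Since `∫ χ (1 + |z|²) dν'` is strictly positive, it cannot be such a junk value. -/
theorem IsRieszMeasure.integrable_cutoff (hν : IsRieszMeasure u Ω ν)
    (hν' : IsRieszMeasure v Ω ν') (hΩ : IsOpen Ω) (hu : ContinuousOn u Ω) (hv : ContinuousOn v Ω)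
    (hU : IsOpen U) (hne : U.Nonempty) (heq : ∀ z ∈ Ω, z ∉ U → v z = u z)
    (hlt : ∀ z ∈ U, u z < v z) (hχ : IsCutoff Ω U χ) : Integrable χ ν' := by
  have hint : Integrable (fun z => χ z * (1 + ‖z‖ ^ 2)) ν' := by
    by_contra hnot
    have hpos := hν.integral_cutoff_mul_lt hν' hΩ hu hv hU hne heq hlt hχ
    rw [integral_undef hnot] at hpos
    exact hpos.not_ge (integral_nonneg fun z => mul_nonneg (hχ.nonneg z) (by positivity))
  refine hint.mono' hχ.contDiff.continuous.aestronglyMeasurable (ae_of_all _ fun z => ?_)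
  rw [Real.norm_of_nonneg (hχ.nonneg z)]
  exact le_mul_of_one_le_right (hχ.nonneg z) (le_add_of_nonneg_right (sq_nonneg _))

end RieszMeasure

section MongeAmpereMeasure

theorem measure_le_of_forall_lt {α : Type*} {_ : MeasurableSpace α} {m : Measure α} {s : Set α}
    {g : α → ℝ} {b : ℝ} {C : ℝ≥0∞} (hg : ∀ x ∈ s, g x < b)
    (hC : ∀ R < b, m {x | x ∈ s ∧ g x < R} ≤ C) : m s ≤ C := by
  obtain ⟨R, hRmono, hRlt, hRlim⟩ := exists_seq_strictMono_tendsto b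
  have hunion : s = ⋃ n, {x | x ∈ s ∧ g x < R n} := by
    refine Subset.antisymm (fun x hx => ?_) (iUnion_subset fun n x hx => hx.1)
    obtain ⟨n, hn⟩ := (hRlim.eventually_const_lt (hg x hx)).exists
    exact mem_iUnion.2 ⟨n, hx, hn⟩
  have hmono : Monotone fun n => {x | x ∈ s ∧ g x < R n} := fun m n hmn x hx =>
    ⟨hx.1, hx.2.trans_le (hRmono.monotone hmn)⟩
  rw [hunion, hmono.measure_iUnion]
  exact iSup_le fun n => hC _ (hRlt n)

variable {Ω K : Set ℂ} {u Ψ : ℂ → ℝ} {ν νr μ : Measure ℂ} {r : ℝ}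

/-- The part `B_u(r) = {u < r}` of `Ω`. -/
abbrev sublevel (Ω : Set ℂ) (u : ℂ → ℝ) (r : ℝ) : Set ℂ := {z | z ∈ Ω ∧ u z < r}

theorem isOpen_sublevel (hΩ : IsOpen Ω) (hu : ContinuousOn u Ω) (r : ℝ) :
    IsOpen (sublevel Ω u r) :=
  hu.isOpen_inter_preimage hΩ isOpen_Iio

theorem measurableSet_inter_le (hΩ : IsOpen Ω) (hu : ContinuousOn u Ω) (r : ℝ) :
    MeasurableSet {z | z ∈ Ω ∧ r ≤ u z} := by
  have hdiff : {z | z ∈ Ω ∧ r ≤ u z} = Ω \ sublevel Ω u r := by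
    ext z
    simp only [mem_ofPred_eq, Set.mem_sdiff, not_and, not_lt]
    exact ⟨fun h => ⟨h.1, fun _ => h.2⟩, fun h => ⟨h.1, h.2 h.1⟩⟩
  exact hdiff ▸ hΩ.measurableSet.diff (isOpen_sublevel hΩ hu r).measurableSet

theorem max_eq_of_notMem_sublevel {z : ℂ} (hz : z ∈ Ω) (hzr : z ∉ sublevel Ω u r) :
    max (u z) r = u z :=
  max_eq_left (not_lt.1 fun h => hzr ⟨hz, h⟩)

theorem IsExhaustion.continuousOn (hu : IsExhaustion u Ω) : ContinuousOn u Ω := hu.subh.1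

theorem IsExhaustion.continuousOn_max (hu : IsExhaustion u Ω) (r : ℝ) :
    ContinuousOn (fun z => max (u z) r) Ω :=
  hu.continuousOn.sup continuousOn_const

theorem IsExhaustion.exists_isCutoff (hu : IsExhaustion u Ω) (hΩ : IsOpen Ω) (hr : r < 0) :
    ∃ χ, IsCutoff Ω (sublevel Ω u r) χ := by
  obtain ⟨χ, hχ⟩ := _root_.exists_isCutoff hΩ (hu.exh r hr).1 (hu.exh r hr).2
  exact ⟨χ, hχ.mono subset_closure⟩

theorem IsExhaustion.exists_subset_sublevel (hu : IsExhaustion u Ω) (hK : IsCompact K)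
    (hKΩ : K ⊆ Ω) : ∃ s < 0, K ⊆ sublevel Ω u s := by
  rcases K.eq_empty_or_nonempty with rfl | hne
  · exact ⟨-1, by norm_num, empty_subset _⟩
  · obtain ⟨z, hz, hmax⟩ := hK.exists_isMaxOn hne (hu.continuousOn.mono hKΩ)
    have hneg : u z < 0 := hu.neg z (hKΩ hz)
    exact ⟨u z / 2, by linarith, fun y hy => ⟨hKΩ hy, (hmax hy).trans_lt (by linarith)⟩⟩

theorem IsRieszMeasure.measure_max_univ_le [IsFiniteMeasure ν] (hν : IsRieszMeasure u Ω ν)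
    (hνr : IsRieszMeasure (fun z => max (u z) r) Ω νr) (hΩ : IsOpen Ω) (hu : IsExhaustion u Ω)
    (hr : r < 0) (hne : (sublevel Ω u r).Nonempty) : νr univ ≤ ν univ := by
  have hΩle : νr Ω ≤ ν univ := by
    refine measure_le_of_forall_lt hu.neg fun R hR => ?_
    obtain ⟨χ, hχ⟩ := hu.exists_isCutoff hΩ (max_lt hr hR)
    have hχr : IsCutoff Ω (sublevel Ω u r) χ :=
      hχ.mono fun z hz => ⟨hz.1, hz.2.trans_le (le_max_left _ _)⟩
    have hχR : IsCutoff Ω (sublevel Ω u R) χ :=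
      hχ.mono fun z hz => ⟨hz.1, hz.2.trans_le (le_max_right _ _)⟩
    have hopen := isOpen_sublevel hΩ hu.continuousOn r
    have heq : ∀ z ∈ Ω, z ∉ sublevel Ω u r → max (u z) r = u z :=
      fun z => max_eq_of_notMem_sublevel
    have hlt : ∀ z ∈ sublevel Ω u r, u z < max (u z) r := fun z hz => lt_max_of_lt_right hz.2
    calc νr (sublevel Ω u R) ≤ ENNReal.ofReal (∫ z, χ z ∂νr) :=
          hχR.measure_le_ofReal_integral (hν.integrable_cutoff hνr hΩ hu.continuousOn
            (hu.continuousOn_max r) hopen hne heq hlt hχr)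
      _ = ENNReal.ofReal (∫ z, χ z ∂ν) := by
          rw [hν.integral_cutoff_eq hνr hΩ hu.continuousOn (hu.continuousOn_max r) hopen heq hχr]
      _ ≤ ν univ := hχR.ofReal_integral_le_measure
  calc νr univ ≤ νr Ω + νr Ωᶜ := by
        rw [← union_compl_self Ω]
        exact measure_union_le _ _
    _ ≤ ν univ := by rwa [hνr.1, add_zero]

theorem IsRieszMeasure.measure_max_eq_zero [IsFiniteMeasure νr]
    (hνr : IsRieszMeasure (fun z => max (u z) r) Ω νr) (hΩ : IsOpen Ω) (hu : ContinuousOn u Ω)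
    (hK : IsCompact K) (hKr : K ⊆ sublevel Ω u r) : νr K = 0 := by
  obtain ⟨χ, hχ⟩ := exists_isCutoff (isOpen_sublevel hΩ hu r) hK hKr
  have hmax (z : ℂ) : max (u z) r * lap χ z = r * lap χ z := by
    by_cases hz : z ∈ tsupport χ
    · rw [max_eq_right (hχ.tsupport_subset hz).2.le]
    · rw [lap_eq_zero_of_notMem_tsupport hz, mul_zero, mul_zero]
  have hint : ∫ z, χ z ∂νr = 0 := by
    rw [hνr.2 χ hχ.contDiff hχ.hasCompactSupport (hχ.tsupport_subset.trans fun z hz => hz.1)]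
    simp only [hmax]
    rw [integral_const_mul, setIntegral_eq_integral_of_forall_compl_eq_zero fun z hz =>
        lap_eq_zero_of_notMem_tsupport fun h => hz (hχ.tsupport_subset h).1,
      integral_lap_eq_zero hχ.contDiff hχ.hasCompactSupport, mul_zero, mul_zero]
  simpa only [hint, ENNReal.ofReal_zero, nonpos_iff_eq_zero] using
    hχ.measure_le_ofReal_integral (m := νr) hχ.integrable

theorem IsMAMeasure.measure_univ_le [IsFiniteMeasure ν] (hμ : IsMAMeasure u Ω ν r μ)
    (hν : IsRieszMeasure u Ω ν) (hΩ : IsOpen Ω) (hu : IsExhaustion u Ω) (hr : r < 0)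
    (hne : (sublevel Ω u r).Nonempty) : μ univ ≤ ν univ := by
  obtain ⟨νr, hνr, rfl⟩ := hμ
  exact (Measure.sub_le univ).trans (hν.measure_max_univ_le hνr hΩ hu hr hne)

theorem IsMAMeasure.measure_compl (hμ : IsMAMeasure u Ω ν r μ) : μ Ωᶜ = 0 := by
  obtain ⟨νr, hνr, rfl⟩ := hμ
  exact nonpos_iff_eq_zero.1 ((Measure.sub_le _).trans hνr.1.le)

theorem IsMAMeasure.measure_eq_zero [IsFiniteMeasure ν] (hμ : IsMAMeasure u Ω ν r μ)
    (hν : IsRieszMeasure u Ω ν) (hΩ : IsOpen Ω) (hu : IsExhaustion u Ω) (hr : r < 0)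
    (hne : (sublevel Ω u r).Nonempty) (hK : IsCompact K) (hKr : K ⊆ sublevel Ω u r) :
    μ K = 0 := by
  obtain ⟨νr, hνr, rfl⟩ := hμ
  have : IsFiniteMeasure νr :=
    ⟨(hν.measure_max_univ_le hνr hΩ hu hr hne).trans_lt (measure_lt_top ν univ)⟩
  exact nonpos_iff_eq_zero.1
    ((Measure.sub_le K).trans (hνr.measure_max_eq_zero hΩ hu.continuousOn hK hKr).le)

theorem IsRieszMeasure.measure_ne_zero [IsFiniteMeasure ν] (hν : IsRieszMeasure u Ω ν)
    (hνr : IsRieszMeasure (fun z => max (u z) r) Ω νr) (hΩ : IsOpen Ω) (hu : IsExhaustion u Ω)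
    (hr : r < 0) (hne : (sublevel Ω u r).Nonempty) : ν Ω ≠ 0 := by
  intro hΩ0
  have hzero : ν univ = 0 := by
    rw [← union_compl_self Ω]
    exact measure_union_null hΩ0 hν.1
  have hνr_le := hν.measure_max_univ_le hνr hΩ hu hr hne
  rw [hzero, nonpos_iff_eq_zero, Measure.measure_univ_eq_zero] at hνr_le
  obtain ⟨χ, hχ⟩ := hu.exists_isCutoff hΩ hr
  have hlt := hν.integral_cutoff_mul_lt hνr hΩ hu.continuousOn (hu.continuousOn_max r)
    (isOpen_sublevel hΩ hu.continuousOn r) hne (fun z => max_eq_of_notMem_sublevel)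
    (fun z hz => lt_max_of_lt_right hz.2) hχ
  rw [hνr_le, Measure.measure_univ_eq_zero.1 hzero] at hlt
  exact hlt.false

theorem IsRieszMeasure.lintegral_cutoff_mul_le [IsFiniteMeasure ν] [IsFiniteMeasure νr]
    (hν : IsRieszMeasure u Ω ν) (hνr : IsRieszMeasure (fun z => max (u z) r) Ω νr)
    (hΩ : IsOpen Ω) (hu : ContinuousOn u Ω) {χ : ℂ → ℝ} (hχ : IsCutoff Ω (sublevel Ω u r) χ)
    (hΨ : ContDiffOn ℝ 2 Ψ Ω) (hnonneg : ∀ z ∈ Ω, 0 ≤ Ψ z) (hlap : ∀ z ∈ Ω, 0 ≤ lap Ψ z) :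
    ∫⁻ z, ENNReal.ofReal (χ z * Ψ z) ∂ν ≤ ∫⁻ z, ENNReal.ofReal (χ z * Ψ z) ∂νr := by
  have hmul (z : ℂ) : 0 ≤ χ z * Ψ z := by
    by_cases hz : z ∈ Ω
    · exact mul_nonneg (hχ.nonneg z) (hnonneg z hz)
    · rw [hχ.eq_zero hz, zero_mul]
  rw [← ofReal_integral_eq_lintegral_ofReal (hχ.integrable_mul hΩ hΨ) (ae_of_all _ hmul),
    ← ofReal_integral_eq_lintegral_ofReal (hχ.integrable_mul hΩ hΨ) (ae_of_all _ hmul),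
    hν.integral_cutoff_mul_eq hνr hΩ hu (hu.sup continuousOn_const) (isOpen_sublevel hΩ hu r)
      (fun z => max_eq_of_notMem_sublevel) hχ hΨ]
  refine ENNReal.ofReal_le_ofReal (le_add_of_nonneg_right (mul_nonneg (by norm_num) ?_))
  exact setIntegral_nonneg hΩ.measurableSet fun z hz =>
    mul_nonneg (sub_nonneg.2 (le_max_left _ _)) (hlap z hz)

theorem IsMAMeasure.setLIntegral_sublevel_le [IsFiniteMeasure ν] (hμ : IsMAMeasure u Ω ν r μ)
    (hν : IsRieszMeasure u Ω ν) (hΩ : IsOpen Ω) (hu : IsExhaustion u Ω) (hr : r < 0)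
    (hne : (sublevel Ω u r).Nonempty) (hΨ : ContDiffOn ℝ 2 Ψ Ω) (hnonneg : ∀ z ∈ Ω, 0 ≤ Ψ z)
    (hlap : ∀ z ∈ Ω, 0 ≤ lap Ψ z) :
    ∫⁻ z in sublevel Ω u r, ENNReal.ofReal (Ψ z) ∂ν ≤ ∫⁻ z, ENNReal.ofReal (Ψ z) ∂μ := by
  obtain ⟨νr, hνr, rfl⟩ := hμ
  have : IsFiniteMeasure νr :=
    ⟨(hν.measure_max_univ_le hνr hΩ hu hr hne).trans_lt (measure_lt_top ν univ)⟩
  obtain ⟨χ, hχ⟩ := hu.exists_isCutoff hΩ hr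
  set T := {z | z ∈ Ω ∧ r ≤ u z}
  set Φ : ℂ → ℝ≥0∞ := fun z => ENNReal.ofReal (χ z * Ψ z)
  have hB : MeasurableSet (sublevel Ω u r) := (isOpen_sublevel hΩ hu.continuousOn r).measurableSet
  have hT : MeasurableSet T := measurableSet_inter_le hΩ hu.continuousOn r
  have hdisj : Disjoint (sublevel Ω u r) T := Set.disjoint_left.2 fun z h h' => h.2.not_ge h'.2
  have hΦT : ∫⁻ z in T, Φ z ∂ν ≠ ⊤ :=
    (hχ.integrable_mul (m := ν.restrict T) hΩ hΨ).lintegral_lt_top.ne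
  have hΦB : ∫⁻ z in sublevel Ω u r, ENNReal.ofReal (Ψ z) ∂ν = ∫⁻ z in sublevel Ω u r, Φ z ∂ν :=
    setLIntegral_congr_fun hB fun z hz => by simp only [Φ, hχ.eq_one z hz, one_mul]
  have hΦle (z : ℂ) : Φ z ≤ ENNReal.ofReal (Ψ z) := by
    refine ENNReal.ofReal_le_ofReal_iff'.2 ?_
    by_cases hz : z ∈ Ω
    · exact .inl (mul_le_of_le_one_left (hnonneg z hz) (hχ.le_one z))
    · exact .inr (by rw [hχ.eq_zero hz, zero_mul])
  rw [hΦB]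
  refine ((ENNReal.add_le_add_iff_right hΦT).1 ?_).trans (lintegral_mono hΦle)
  calc ∫⁻ z in sublevel Ω u r, Φ z ∂ν + ∫⁻ z in T, Φ z ∂ν
      = ∫⁻ z in sublevel Ω u r ∪ T, Φ z ∂ν := (lintegral_union hT hdisj).symm
    _ ≤ ∫⁻ z, Φ z ∂ν := setLIntegral_le_lintegral _ _
    _ ≤ ∫⁻ z, Φ z ∂νr :=
        hν.lintegral_cutoff_mul_le hνr hΩ hu.continuousOn hχ hΨ hnonneg hlap
    _ ≤ ∫⁻ z, Φ z ∂(νr - ν.restrict T + ν.restrict T) :=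
        lintegral_mono' (Measure.sub_le_iff_le_add.1 le_rfl) le_rfl
    _ = ∫⁻ z, Φ z ∂(νr - ν.restrict T) + ∫⁻ z in T, Φ z ∂ν := lintegral_add_measure _ _ _

end MongeAmpereMeasure

/-! ### Harmonic majorants on subdiscs -/

section SmoothedNormPow

variable {p δ ε : ℝ} {f : ℂ → ℂ} {z : ℂ}

theorem smoothedNormPow_nonneg (hε : 0 ≤ ε) : 0 ≤ smoothedNormPow p ε f z := by
  rw [smoothedNormPow]
  positivity

theorem rpow_eq_sq_rpow_half {x : ℝ} (hx : 0 ≤ x) (p : ℝ) : x ^ p = (x ^ 2) ^ (p / 2) := by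
  rw [← Real.rpow_natCast_mul hx]
  congr 1
  push_cast
  ring

theorem norm_rpow_le_smoothedNormPow (hp : 0 ≤ p) (hε : 0 ≤ ε) :
    ‖f z‖ ^ p ≤ smoothedNormPow p ε f z := by
  rw [rpow_eq_sq_rpow_half (norm_nonneg _), smoothedNormPow]
  gcongr
  linarith

theorem smoothedNormPow_le (hp : 1 ≤ p) (hδ : 0 ≤ δ) :
    smoothedNormPow p (δ ^ (2 / p)) f z ≤ 2 ^ (p - 1) * (‖f z‖ ^ p + δ) := by
  have hp0 : p ≠ 0 := by linarith
  set b := δ ^ (1 / p)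
  have hb : 0 ≤ b := Real.rpow_nonneg hδ _
  have hb_sq : δ ^ (2 / p) = b ^ 2 := by
    rw [← Real.rpow_mul_natCast hδ]
    congr 1
    push_cast
    ring
  have hbp : b ^ p = δ := by rw [← Real.rpow_mul hδ, one_div_mul_cancel hp0, Real.rpow_one]
  calc smoothedNormPow p (δ ^ (2 / p)) f z ≤ (‖f z‖ + b) ^ p := by
        rw [rpow_eq_sq_rpow_half (by positivity) p, smoothedNormPow, hb_sq]
        gcongr
        nlinarith [mul_nonneg (norm_nonneg (f z)) hb]
    _ ≤ 2 ^ (p - 1) * (‖f z‖ ^ p + b ^ p) := by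
        exact_mod_cast NNReal.rpow_add_le_mul_rpow_add_rpow ‖f z‖₊ ⟨b, hb⟩ hp
    _ = 2 ^ (p - 1) * (‖f z‖ ^ p + δ) := by rw [hbp]

theorem lintegral_smoothedNormPow_le (hp : 1 ≤ p) (hδ : 0 ≤ δ) (m : Measure ℂ) :
    ∫⁻ z, ENNReal.ofReal (smoothedNormPow p (δ ^ (2 / p)) f z) ∂m ≤
      ENNReal.ofReal (2 ^ (p - 1)) *
        (∫⁻ z, ENNReal.ofReal (‖f z‖ ^ p) ∂m + ENNReal.ofReal δ * m univ) := by
  rw [← lintegral_const, ← lintegral_add_right _ measurable_const,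
    ← lintegral_const_mul' _ _ ENNReal.ofReal_ne_top]
  refine lintegral_mono fun z => ?_
  rw [← ENNReal.ofReal_add (by positivity) hδ, ← ENNReal.ofReal_mul (by positivity)]
  exact ENNReal.ofReal_le_ofReal (smoothedNormPow_le hp hδ)

end SmoothedNormPow

section Glue

variable {Φ H N : ℂ → ℝ} {η ρ : ℝ} {z : ℂ}

/-- The smooth maximum of `Φ` and `H` on `{N < ρ}`, extended by `Φ`. It is as smooth as `Φ` and `H`
as soon as `H < Φ` on `{N = ρ}`. -/
def glue (η ρ : ℝ) (N Φ H : ℂ → ℝ) (w : ℂ) : ℝ :=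
  if N w < ρ then Φ w + smoothPosPart η (H w - Φ w) else Φ w

theorem le_glue (hη : 0 ≤ η) : Φ z ≤ glue η ρ N Φ H z := by
  rw [glue]
  split_ifs
  · exact le_add_of_nonneg_right (smoothPosPart_nonneg hη _)
  · exact le_rfl

theorem sub_le_glue (hη : 0 < η) (hz : N z < ρ) : H z - η ≤ glue η ρ N Φ H z := by
  rw [glue, if_pos hz]
  linarith [sub_le_smoothPosPart hη (H z - Φ z)]

theorem glue_eventuallyEq (hη : 0 ≤ η) (hN : ContinuousAt N z) (hΦ : ContinuousAt Φ z)
    (hH : ContinuousAt H z) (hlt : N z = ρ → H z < Φ z) :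
    glue η ρ N Φ H =ᶠ[𝓝 z] (fun w => Φ w + smoothPosPart η (H w - Φ w)) ∨
      glue η ρ N Φ H =ᶠ[𝓝 z] Φ := by
  rcases lt_trichotomy (N z) ρ with h | h | h
  · refine .inl ?_
    filter_upwards [hN.eventually_lt_const h] with w hw using if_pos hw
  · refine .inr ?_
    filter_upwards [hH.eventually_lt hΦ (hlt h)] with w hw
    rw [glue, smoothPosPart_of_nonpos hη (by linarith), add_zero, ite_self]
  · refine .inr ?_
    filter_upwards [hN.eventually_const_lt h] with w hw using if_neg hw.not_gt

theorem contDiffAt_glue (hη : 0 ≤ η) (hN : ContinuousAt N z) (hΦ : ContDiffAt ℝ 2 Φ z)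
    (hH : ContDiffAt ℝ 2 H z) (hlt : N z = ρ → H z < Φ z) :
    ContDiffAt ℝ 2 (glue η ρ N Φ H) z := by
  rcases glue_eventuallyEq hη hN hΦ.continuousAt hH.continuousAt hlt with h | h
  · exact (hΦ.add ((contDiff_smoothPosPart η).contDiffAt.comp z
      (hH.sub hΦ))).congr_of_eventuallyEq h
  · exact hΦ.congr_of_eventuallyEq h

theorem lap_glue_nonneg (hη : 0 ≤ η) (hN : ContinuousAt N z) (hΦ : ContDiffAt ℝ 2 Φ z)
    (hH : ContDiffAt ℝ 2 H z) (hlapΦ : 0 ≤ lap Φ z) (hlapH : 0 ≤ lap H z)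
    (hlt : N z = ρ → H z < Φ z) : 0 ≤ lap (glue η ρ N Φ H) z := by
  rcases glue_eventuallyEq hη hN hΦ.continuousAt hH.continuousAt hlt with h | h
  · rw [lap_congr h]
    exact lap_add_smoothPosPart_nonneg hη hΦ hH hlapΦ hlapH
  · rwa [lap_congr h]

variable {Ω : Set ℂ} {u : ℂ → ℝ} {ν μ : Measure ℂ} {r : ℝ}

/-- The glued function dominates `H - η` on `{N < ρ}`, while `μ` only sees it where it is `Φ`. -/
theorem IsMAMeasure.setLIntegral_sub_le [IsFiniteMeasure ν] (hμ : IsMAMeasure u Ω ν r μ)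
    (hν : IsRieszMeasure u Ω ν) (hΩ : IsOpen Ω) (hu : IsExhaustion u Ω) (hr : r < 0)
    (hne : (sublevel Ω u r).Nonempty) (hN : ContinuousOn N Ω)
    (hK : IsCompact {z | z ∈ Ω ∧ N z ≤ ρ}) (hKr : {z | z ∈ Ω ∧ N z ≤ ρ} ⊆ sublevel Ω u r)
    (hη : 0 < η) (hΦ : ∀ z ∈ Ω, ContDiffAt ℝ 2 Φ z) (hH : ∀ z ∈ Ω, ContDiffAt ℝ 2 H z)
    (hΦ0 : ∀ z ∈ Ω, 0 ≤ Φ z) (hlapΦ : ∀ z ∈ Ω, 0 ≤ lap Φ z) (hlapH : ∀ z ∈ Ω, 0 ≤ lap H z)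
    (hlt : ∀ z ∈ Ω, N z = ρ → H z < Φ z) :
    ∫⁻ z in sublevel Ω N ρ, ENNReal.ofReal (H z - η) ∂ν ≤ ∫⁻ z, ENNReal.ofReal (Φ z) ∂μ := by
  have hNat (z : ℂ) (hz : z ∈ Ω) : ContinuousAt N z := hN.continuousAt (hΩ.mem_nhds hz)
  have hsub : sublevel Ω N ρ ⊆ sublevel Ω u r := fun z hz => hKr ⟨hz.1, hz.2.le⟩
  have hnull : μ {z | z ∈ Ω ∧ N z ≤ ρ} = 0 := hμ.measure_eq_zero hν hΩ hu hr hne hK hKr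
  calc ∫⁻ z in sublevel Ω N ρ, ENNReal.ofReal (H z - η) ∂ν
      ≤ ∫⁻ z in sublevel Ω N ρ, ENNReal.ofReal (glue η ρ N Φ H z) ∂ν :=
        setLIntegral_mono' (isOpen_sublevel hΩ hN ρ).measurableSet fun z hz =>
          ENNReal.ofReal_le_ofReal (sub_le_glue hη hz.2)
    _ ≤ ∫⁻ z in sublevel Ω u r, ENNReal.ofReal (glue η ρ N Φ H z) ∂ν :=
        lintegral_mono_set hsub
    _ ≤ ∫⁻ z, ENNReal.ofReal (glue η ρ N Φ H z) ∂μ :=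
        hμ.setLIntegral_sublevel_le hν hΩ hu hr hne
          (fun z hz => (contDiffAt_glue hη.le (hNat z hz) (hΦ z hz) (hH z hz)
            (hlt z hz)).contDiffWithinAt)
          (fun z hz => (hΦ0 z hz).trans (le_glue hη.le))
          fun z hz => lap_glue_nonneg hη.le (hNat z hz) (hΦ z hz) (hH z hz) (hlapΦ z hz)
            (hlapH z hz) (hlt z hz)
    _ = ∫⁻ z, ENNReal.ofReal (Φ z) ∂μ := by
        refine lintegral_congr_ae ?_
        filter_upwards [compl_mem_ae_iff.2 hnull, compl_mem_ae_iff.2 hμ.measure_compl]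
          with z hzK hzΩ
        rw [glue, if_neg fun h => hzK ⟨not_not.1 hzΩ, h.le⟩]

end Glue

section Majorant

variable {Ω : Set ℂ} {ψ G f : ℂ → ℂ} {u : ℂ → ℝ} {ν μ : Measure ℂ} {p r R₀ ρ δ : ℝ}

theorem IsConformalChart.isCompact_setOf_norm_le (hc : IsConformalChart Ω ψ G) (hρ : ρ < 1) :
    IsCompact {z | z ∈ Ω ∧ ‖G z‖ ≤ ρ} := by
  have hball : closedBall (0 : ℂ) ρ ⊆ ball 0 1 := closedBall_subset_ball hρ
  have himage : {z | z ∈ Ω ∧ ‖G z‖ ≤ ρ} = ψ '' closedBall 0 ρ := by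
    ext z
    constructor
    · exact fun hz => ⟨G z, mem_closedBall_zero_iff.2 hz.2, hc.rightInvOn hz.1⟩
    · rintro ⟨w, hw, rfl⟩
      exact ⟨hc.mapsTo (hball hw), by rwa [hc.leftInvOn (hball hw), ← mem_closedBall_zero_iff]⟩
  rw [himage]
  exact (isCompact_closedBall 0 ρ).image_of_continuousOn
    (hc.differentiableOn.continuousOn.mono hball)

theorem IsConformalChart.exists_measure_sublevel_ne_zero (hc : IsConformalChart Ω ψ G)
    (hν : ν Ω ≠ 0) : ∃ R ∈ Ico (0 : ℝ) 1, ν (sublevel Ω (fun z => ‖G z‖) R) ≠ 0 := by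
  by_contra! hzero
  refine hν (nonpos_iff_eq_zero.1 (measure_le_of_forall_lt
    (fun z hz => mem_ball_zero_iff.1 (hc.mapsTo_inv hz)) fun R hR => ?_))
  rcases lt_or_ge R 0 with hR0 | hR0
  · refine (measure_mono_null (fun z hz => ?_) (measure_empty (μ := ν))).le
    exact ((norm_nonneg (G z)).trans_lt hz.2).not_gt hR0
  · exact (hzero R ⟨hR0, hR⟩).le

theorem mul_le_re_of_nonneg_sphere {P : ℂ → ℂ} {w : ℂ} (hP : Differentiable ℂ P)
    (h0 : ∀ x ∈ sphere (0 : ℂ) ρ, 0 ≤ (P x).re) (hρ : (1 + R₀) / 2 ≤ ρ) (hρ1 : ρ < 1)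
    (hw : ‖w‖ < R₀) :
    (1 - R₀) / 4 * (P 0).re ≤ (P w).re := by
  have hw0 := norm_nonneg w
  have hρ0 : 0 < ρ := by linarith
  have hharm : InnerProductSpace.HarmonicOnNhd (fun x => (P x).re) (closedBall 0 ρ) :=
    fun x _ => (hP.analyticAt x).harmonicAt_re
  have hP0 : 0 ≤ (P 0).re :=
    nonneg_of_nonneg_sphere (h := fun x => (P x).re) hharm h0 (mem_ball_self hρ0)
  refine le_trans ?_ (harnack_le (h := fun x => (P x).re) hharm h0
    (mem_ball_zero_iff.2 (by linarith : ‖w‖ < ρ)))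
  rw [sub_zero]
  refine mul_le_mul_of_nonneg_right ?_ hP0
  rw [le_div_iff₀ (by linarith)]
  nlinarith

/-- `Φ` is glued to the harmonic function `Re (P ∘ G) - δ` on `‖G‖ < ρ`, where `μ` does not
charge; Harnack bounds the latter from below on `‖G‖ < R₀`. -/
theorem IsConformalChart.measure_mul_le_lintegral [IsFiniteMeasure ν] {Φ : ℂ → ℝ} {P : ℂ → ℂ}
    (hc : IsConformalChart Ω ψ G) (hμ : IsMAMeasure u Ω ν r μ) (hν : IsRieszMeasure u Ω ν)
    (hu : IsExhaustion u Ω) (hr : r < 0) (hne : (sublevel Ω u r).Nonempty)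
    (hδ : 0 < δ) (hρ : (1 + R₀) / 2 ≤ ρ) (hρ1 : ρ < 1)
    (hKr : {z | z ∈ Ω ∧ ‖G z‖ ≤ ρ} ⊆ sublevel Ω u r) (hΦ : ∀ z ∈ Ω, ContDiffAt ℝ 2 Φ z)
    (hΦ0 : ∀ z ∈ Ω, 0 ≤ Φ z) (hΦlap : ∀ z ∈ Ω, 0 ≤ lap Φ z) (hP : Differentiable ℂ P)
    (hPΦ : ∀ w ∈ sphere (0 : ℂ) ρ, (P w).re ∈ Ioo (Φ (ψ w)) (Φ (ψ w) + δ)) :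
    ν (sublevel Ω (fun z => ‖G z‖) R₀) * ENNReal.ofReal ((1 - R₀) / 4 * (P 0).re - 2 * δ) ≤
      ∫⁻ z, ENNReal.ofReal (Φ z) ∂μ := by
  have hPnonneg : ∀ w ∈ sphere (0 : ℂ) ρ, 0 ≤ (P w).re := fun w hw =>
    (hΦ0 _ (hc.mapsTo (sphere_subset_ball hρ1 hw))).trans (hPΦ w hw).1.le
  set H : ℂ → ℝ := fun z => (P (G z) - δ).re
  have hH : HarmonicOn H Ω := (harmonicOn_iff_harmonicOnNhd hc.isOpen).2 fun z hz =>
    (((hP.analyticAt _).comp (hc.differentiableOn_inv.analyticOnNhd hc.isOpen z hz)).sub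
      analyticAt_const).harmonicAt_re
  have hHlt : ∀ z ∈ Ω, ‖G z‖ = ρ → H z < Φ z := fun z hz hzρ => by
    have hlt := (hPΦ (G z) (mem_sphere_zero_iff_norm.2 hzρ)).2
    rw [hc.rightInvOn hz] at hlt
    simpa only [H, sub_re, ofReal_re, sub_lt_iff_lt_add] using hlt
  calc ν (sublevel Ω (fun z => ‖G z‖) R₀) * ENNReal.ofReal ((1 - R₀) / 4 * (P 0).re - 2 * δ)
      = ∫⁻ _ in sublevel Ω (fun z => ‖G z‖) R₀,
          ENNReal.ofReal ((1 - R₀) / 4 * (P 0).re - 2 * δ) ∂ν := by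
        rw [setLIntegral_const, mul_comm]
    _ ≤ ∫⁻ z in sublevel Ω (fun z => ‖G z‖) R₀, ENNReal.ofReal (H z - δ) ∂ν := by
        refine setLIntegral_mono' (isOpen_sublevel hc.isOpen
          hc.differentiableOn_inv.continuousOn.norm R₀).measurableSet fun z hz =>
          ENNReal.ofReal_le_ofReal ?_
        simp only [H, sub_re, ofReal_re]
        linarith [mul_le_re_of_nonneg_sphere hP hPnonneg hρ hρ1 hz.2]
    _ ≤ ∫⁻ z in sublevel Ω (fun z => ‖G z‖) ρ, ENNReal.ofReal (H z - δ) ∂ν := by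
        refine lintegral_mono_set fun z hz => ⟨hz.1, hz.2.trans ?_⟩
        linarith
    _ ≤ ∫⁻ z, ENNReal.ofReal (Φ z) ∂μ :=
        hμ.setLIntegral_sub_le hν hc.isOpen hu hr hne
          hc.differentiableOn_inv.continuousOn.norm (hc.isCompact_setOf_norm_le hρ1) hKr hδ hΦ
          (fun z hz => hH.1.contDiffAt (hc.isOpen.mem_nhds hz)) hΦ0 hΦlap
          (fun z hz => (hH.2 z hz).ge) hHlt

theorem IsConformalChart.exists_entire_re_majorant [IsFiniteMeasure ν]
    (hc : IsConformalChart Ω ψ G) (hμ : IsMAMeasure u Ω ν r μ) (hν : IsRieszMeasure u Ω ν)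
    (hu : IsExhaustion u Ω) (hr : r < 0) (hp : 1 ≤ p)
    (hf : DifferentiableOn ℂ f Ω) (hR₀ : 0 ≤ R₀) (hδ : 0 < δ) (hρ : (1 + R₀) / 2 ≤ ρ)
    (hρ1 : ρ < 1) (hKr : {z | z ∈ Ω ∧ ‖G z‖ ≤ ρ} ⊆ sublevel Ω u r) :
    ∃ P : ℂ → ℂ, Differentiable ℂ P ∧ (∀ w ∈ sphere (0 : ℂ) ρ, ‖f (ψ w)‖ ^ p ≤ (P w).re) ∧
      ν (sublevel Ω (fun z => ‖G z‖) R₀) * ENNReal.ofReal ((1 - R₀) / 4 * ‖P 0‖ - 2 * δ) ≤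
        ENNReal.ofReal (2 ^ (p - 1)) *
          (∫⁻ z, ENNReal.ofReal (‖f z‖ ^ p) ∂μ + ENNReal.ofReal δ * ν univ) := by
  have hψ0 : (0 : ℂ) ∈ ball 0 1 := mem_ball_self one_pos
  have hne : (sublevel Ω u r).Nonempty :=
    ⟨ψ 0, hKr ⟨hc.mapsTo hψ0, by rw [hc.leftInvOn hψ0, norm_zero]; linarith⟩⟩
  have hε : 0 < δ ^ (2 / p) := Real.rpow_pos_of_pos hδ _
  set Φ := smoothedNormPow p (δ ^ (2 / p)) f
  have hfa : AnalyticOnNhd ℂ f Ω := hf.analyticOnNhd hc.isOpen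
  have hΦ : ∀ z ∈ Ω, ContDiffAt ℝ 2 Φ z := fun z hz => contDiffAt_smoothedNormPow hε (hfa z hz)
  have hΦψ : ContinuousOn (fun w => Φ (ψ w)) (sphere 0 ρ) :=
    (show ContinuousOn Φ Ω from fun z hz => (hΦ z hz).continuousAt.continuousWithinAt).comp
      (hc.differentiableOn.continuousOn.mono (sphere_subset_ball hρ1))
      (hc.mapsTo.mono_left (sphere_subset_ball hρ1))
  obtain ⟨P, hP, hPim, hPΦ⟩ := exists_entire_re_mem_Ioo_sphere (by linarith) hΦψ hδ
  have hP0 : ‖P 0‖ = (P 0).re := by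
    rw [← Complex.abs_re_eq_norm.2 hPim, abs_of_nonneg]
    exact nonneg_of_nonneg_sphere (h := fun x => (P x).re)
      (fun x _ => (hP.analyticAt x).harmonicAt_re)
      (fun w hw => (smoothedNormPow_nonneg hε.le).trans (hPΦ w hw).1.le)
      (mem_ball_self (by linarith))
  refine ⟨P, hP, fun w hw =>
    (norm_rpow_le_smoothedNormPow (by linarith) hε.le).trans (hPΦ w hw).1.le, ?_⟩
  rw [hP0]
  calc ν (sublevel Ω (fun z => ‖G z‖) R₀) * ENNReal.ofReal ((1 - R₀) / 4 * (P 0).re - 2 * δ)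
      ≤ ∫⁻ z, ENNReal.ofReal (Φ z) ∂μ :=
        hc.measure_mul_le_lintegral hμ hν hu hr hne hδ hρ hρ1 hKr hΦ
          (fun z _ => smoothedNormPow_nonneg hε.le)
          (fun z hz => lap_smoothedNormPow_nonneg (by linarith) hε (hfa z hz)) hP hPΦ
    _ ≤ ENNReal.ofReal (2 ^ (p - 1)) *
          (∫⁻ z, ENNReal.ofReal (‖f z‖ ^ p) ∂μ + ENNReal.ofReal δ * μ univ) :=
        lintegral_smoothedNormPow_le hp hδ.le μ
    _ ≤ _ := by
        refine mul_le_mul_right (add_le_add_right (mul_le_mul_right ?_ _) _) _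
        exact hμ.measure_univ_le hν hc.isOpen hu hr hne

end Majorant

/-! ### Normal families -/

section NormalFamilies

variable {ι α β : Type*} [PseudoMetricSpace α] [PseudoMetricSpace β]

theorem exists_tendsto_ultrafilter_of_eventually_norm_le {E : Type*} [SeminormedAddCommGroup E]
    [ProperSpace E] {𝒰 : Ultrafilter ι} {x : ι → E} {M : ℝ} (hx : ∀ᶠ n in 𝒰, ‖x n‖ ≤ M) :
    ∃ q, Tendsto x 𝒰 (𝓝 q) := by
  obtain ⟨q, -, hq⟩ := (isCompact_closedBall (0 : E) M).ultrafilter_le_nhds (𝒰.map x)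
    (le_principal_iff.2 (hx.mono fun n hn => mem_closedBall_zero_iff.2 hn))
  exact ⟨q, hq⟩

theorem tendstoLocallyUniformlyOn_of_eventually_dist_le {l : Filter ι} [l.NeBot] {F : ι → α → β}
    {f : α → β} {s : Set α} (hs : IsOpen s) (hlim : ∀ x ∈ s, Tendsto (F · x) l (𝓝 (f x)))
    (hlip : ∀ x ∈ s, ∃ C, ∃ t ∈ 𝓝 x, ∀ᶠ n in l, ∀ y ∈ t, dist (F n y) (F n x) ≤ C * dist y x) :
    TendstoLocallyUniformlyOn F f l s := by
  refine Metric.tendstoLocallyUniformlyOn_iff.2 fun ε hε x hx => ?_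
  obtain ⟨C, t, ht, hC⟩ := hlip x hx
  have hsmall : ∀ᶠ y in 𝓝 x, C * dist y x < ε / 3 :=
    (by fun_prop : Continuous fun y => C * dist y x).tendsto' x 0 (by simp) |>.eventually_lt_const
      (by positivity)
  refine ⟨t ∩ s ∩ {y | C * dist y x < ε / 3}, mem_nhdsWithin_of_mem_nhds
    (inter_mem (inter_mem ht (hs.mem_nhds hx)) hsmall), ?_⟩
  have hf : ∀ y ∈ t ∩ s, dist (f y) (f x) ≤ C * dist y x := fun y hy =>
    le_of_tendsto ((hlim y hy.2).dist (hlim x hx)) (hC.mono fun n hn => hn y hy.1)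
  filter_upwards [hC, (hlim x hx).eventually (ball_mem_nhds _ (by positivity : 0 < ε / 3))]
    with n hn hnx y ⟨hy, hyε⟩
  calc dist (f y) (F n y) ≤ dist (f y) (f x) + dist (f x) (F n x) + dist (F n x) (F n y) :=
        dist_triangle4 _ _ _ _
    _ < ε / 3 + ε / 3 + ε / 3 := by
        rw [dist_comm (F n x)]
        exact add_lt_add (add_lt_add ((hf y hy).trans_lt hyε) (mem_ball'.1 hnx))
          ((hn y hy.1).trans_lt hyε)
    _ = ε := by ring

/-- Montel's theorem along an ultrafilter. -/
theorem exists_tendstoLocallyUniformlyOn_of_locally_bounded {𝒰 : Ultrafilter ι} {P : ι → ℂ → ℂ}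
    {U : Set ℂ} (hU : IsOpen U) (hP : ∀ᶠ n in 𝒰, DifferentiableOn ℂ (P n) U)
    (hbdd : ∀ x ∈ U, ∃ t ∈ 𝓝 x, ∃ M, ∀ᶠ n in 𝒰, ∀ w ∈ t, ‖P n w‖ ≤ M) :
    ∃ Q, DifferentiableOn ℂ Q U ∧ TendstoLocallyUniformlyOn P Q 𝒰 U := by
  have hlim : ∀ x ∈ U, ∃ q, Tendsto (P · x) 𝒰 (𝓝 q) := fun x hx => by
    obtain ⟨t, ht, M, hM⟩ := hbdd x hx
    exact exists_tendsto_ultrafilter_of_eventually_norm_le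
      (hM.mono fun n hn => hn x (mem_of_mem_nhds ht))
  choose! Q hQ using hlim
  have hconv : TendstoLocallyUniformlyOn P Q 𝒰 U := by
    refine tendstoLocallyUniformlyOn_of_eventually_dist_le hU hQ fun x hx => ?_
    obtain ⟨t, ht, M, hM⟩ := hbdd x hx
    obtain ⟨d, hd, hball⟩ := Metric.mem_nhds_iff.1 (inter_mem ht (hU.mem_nhds hx))
    refine ⟨2 * M / d, ball x d, ball_mem_nhds x hd, ?_⟩
    filter_upwards [hM, hP] with n hn hPn y hy
    refine Complex.dist_le_div_mul_dist_of_mapsTo_ball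
      (hPn.mono (hball.trans inter_subset_right)) (fun v hv => ?_) hy
    rw [mem_closedBall, two_mul]
    exact (dist_le_norm_add_norm _ _).trans
      (add_le_add (hn v (hball hv).1) (hn x (mem_of_mem_nhds ht)))
  exact ⟨Q, hconv.differentiableOn hP hU, hconv⟩

end NormalFamilies

section DiscMajorant

variable {P F : ℂ → ℂ} {w : ℂ} {p ρ R C c₀ : ℝ} {c : ℝ → ℝ}

theorem norm_le_of_re_nonneg_sphere (hP : Differentiable ℂ P)
    (h0 : ∀ x ∈ sphere (0 : ℂ) ρ, 0 ≤ (P x).re) (hw : w ∈ ball 0 ρ) :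
    ‖P w‖ ≤ (ρ + ‖w‖) / (ρ - ‖w‖) * ‖P 0‖ := by
  have hre : ∀ v ∈ ball (0 : ℂ) ρ, 0 ≤ (P v).re := fun v hv =>
    nonneg_of_nonneg_sphere (h := fun x => (P x).re)
      (fun x _ => (hP.analyticAt x).harmonicAt_re) h0 hv
  have hbound : ∀ M > 0, ‖P w‖ ≤
      2 * M * ‖w‖ / (ρ - ‖w‖) + ‖P 0‖ * (ρ + ‖w‖) / (ρ - ‖w‖) := fun M hM => by
    simpa only [norm_neg, Pi.neg_apply] using Complex.borelCaratheodory (f := -P) hM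
      hP.neg.differentiableOn
      (fun v hv => by simpa using (neg_nonpos.2 (hre v hv)).trans hM.le) (pos_of_mem_ball hw) hw
  have hlim : Tendsto (fun M : ℝ => 2 * M * ‖w‖ / (ρ - ‖w‖) + ‖P 0‖ * (ρ + ‖w‖) / (ρ - ‖w‖))
      (𝓝[>] 0) (𝓝 ((ρ + ‖w‖) / (ρ - ‖w‖) * ‖P 0‖)) :=
    ((by fun_prop : Continuous fun M : ℝ =>
      2 * M * ‖w‖ / (ρ - ‖w‖) + ‖P 0‖ * (ρ + ‖w‖) / (ρ - ‖w‖)).tendsto' 0 _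
        (by ring)).mono_left nhdsWithin_le_nhds
  exact ge_of_tendsto hlim (eventually_mem_nhdsWithin.mono hbound)

theorem norm_le_of_re_nonneg_sphere_of_norm_le (hP : Differentiable ℂ P)
    (h0 : ∀ x ∈ sphere (0 : ℂ) ρ, 0 ≤ (P x).re) (hC : ‖P 0‖ ≤ C) (hw : ‖w‖ ≤ R) (hR : R < ρ) :
    ‖P w‖ ≤ (ρ + R) / (ρ - R) * C := by
  have := norm_nonneg w
  refine (norm_le_of_re_nonneg_sphere hP h0 (mem_ball_zero_iff.2 (hw.trans_lt hR))).trans ?_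
  exact mul_le_mul (div_le_div₀ (by linarith) (by linarith) (by linarith) (by linarith)) hC
    (norm_nonneg _) (div_nonneg (by linarith) (by linarith))

theorem tendsto_one_sub_nhdsGT_zero : Tendsto (fun δ : ℝ => 1 - δ) (𝓝[>] 0) (𝓝 1) :=
  ((by fun_prop : Continuous fun δ : ℝ => 1 - δ).tendsto' 0 1 (by norm_num)).mono_left
    nhdsWithin_le_nhds

theorem tendsto_harnack_bound (hc : Tendsto c (𝓝[>] 0) (𝓝 c₀)) (hR : R < 1) :
    Tendsto (fun δ => (1 - δ + R) / (1 - δ - R) * c δ) (𝓝[>] 0)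
      (𝓝 ((1 + R) / (1 - R) * c₀)) :=
  ((tendsto_one_sub_nhdsGT_zero.add_const R).div (tendsto_one_sub_nhdsGT_zero.sub_const R)
    (sub_ne_zero.2 hR.ne')).mul hc

/-- The functions `P` for `δ → 0⁺` form a normal family by Borel–Carathéodory. -/
theorem exists_re_majorant_of_eventually (hp : 1 ≤ p) (hF : DifferentiableOn ℂ F (ball 0 1))
    (hc : Tendsto c (𝓝[>] 0) (𝓝 c₀))
    (hmaj : ∀ᶠ δ in 𝓝[>] (0 : ℝ), ∃ P : ℂ → ℂ, Differentiable ℂ P ∧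
      (∀ w ∈ sphere (0 : ℂ) (1 - δ), ‖F w‖ ^ p ≤ (P w).re) ∧ ‖P 0‖ ≤ c δ) :
    ∃ Q : ℂ → ℂ, DifferentiableOn ℂ Q (ball 0 1) ∧ ∀ w ∈ ball (0 : ℂ) 1,
      (Q w).re ∈ Icc (‖F w‖ ^ p) ((1 + ‖w‖) / (1 - ‖w‖) * c₀) := by
  obtain ⟨P, hP⟩ := Filter.skolem.1 hmaj
  set 𝒰 := Ultrafilter.of (𝓝[>] (0 : ℝ))
  have h𝒰 : (𝒰 : Filter ℝ) ≤ 𝓝[>] 0 := Ultrafilter.of_le _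
  have hlt (R : ℝ) (hR : R < 1) : ∀ᶠ δ in 𝓝[>] (0 : ℝ), R < 1 - δ :=
    tendsto_one_sub_nhdsGT_zero.eventually_const_lt hR
  have hbound (R : ℝ) (hR : R < 1) : ∀ᶠ δ in 𝓝[>] (0 : ℝ), ∀ w, ‖w‖ ≤ R →
      ‖P δ w‖ ≤ (1 - δ + R) / (1 - δ - R) * c δ := by
    filter_upwards [hP, hlt R hR] with δ ⟨hdiff, hsphere, hcδ⟩ hδ w hw
    exact norm_le_of_re_nonneg_sphere_of_norm_le hdiff
      (fun x hx => (Real.rpow_nonneg (norm_nonneg _) p).trans (hsphere x hx)) hcδ hw hδ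
  have hlower (w : ℂ) (hw : ‖w‖ < 1) : ∀ᶠ δ in 𝓝[>] (0 : ℝ), ‖F w‖ ^ p ≤ (P δ w).re := by
    filter_upwards [hP, hlt _ hw, self_mem_nhdsWithin] with δ ⟨hdiff, hsphere, _⟩ hδ hδ0
    exact norm_rpow_le_of_le_sphere (h := fun x => (P δ x).re) hp
      ((hF.analyticOnNhd isOpen_ball).mono (closedBall_subset_ball (sub_lt_self 1 hδ0)))
      (fun x _ => (hdiff.analyticAt x).harmonicAt_re) hsphere (mem_ball_zero_iff.2 hδ)
  have hbdd : ∀ x ∈ ball (0 : ℂ) 1, ∃ t ∈ 𝓝 x, ∃ M, ∀ᶠ δ in 𝓝[>] (0 : ℝ), ∀ w ∈ t,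
      ‖P δ w‖ ≤ M := fun x hx => by
    obtain ⟨R, hxR, hR⟩ := exists_between (mem_ball_zero_iff.1 hx)
    refine ⟨ball 0 R, isOpen_ball.mem_nhds (mem_ball_zero_iff.2 hxR), (1 + R) / (1 - R) * c₀ + 1,
      ?_⟩
    filter_upwards [hbound R hR, (tendsto_harnack_bound hc hR).eventually_le_const (lt_add_one _)]
      with δ hδ hle w hw
    exact (hδ w (mem_ball_zero_iff.1 hw).le).trans hle
  obtain ⟨Q, hQ, hlim⟩ := exists_tendstoLocallyUniformlyOn_of_locally_bounded (𝒰 := 𝒰)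
    isOpen_ball (h𝒰 (hP.mono fun δ hδ => hδ.1.differentiableOn)) fun x hx =>
      (hbdd x hx).imp fun t ⟨ht, M, hM⟩ => ⟨ht, M, h𝒰 hM⟩
  refine ⟨Q, hQ, fun w hw => ?_⟩
  have hw1 : ‖w‖ < 1 := mem_ball_zero_iff.1 hw
  have hre : Tendsto (fun δ => (P δ w).re) 𝒰 (𝓝 (Q w).re) :=
    (Complex.continuous_re.tendsto _).comp (hlim.tendsto_at hw)
  exact ⟨ge_of_tendsto hre (h𝒰 (hlower w hw1)),
    le_of_tendsto_of_tendsto hre ((tendsto_harnack_bound hc hw1).mono_left h𝒰)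
      (h𝒰 ((hbound _ hw1).mono fun δ hδ => (Complex.re_le_norm _).trans (hδ w le_rfl)))⟩

end DiscMajorant

section HarmonicMajorant

variable {Ω : Set ℂ} {u : ℂ → ℝ} {ν : Measure ℂ} {μfam : ℝ → Measure ℂ} {ψ G f : ℂ → ℂ}
  {p R₀ : ℝ}

theorem le_div_toReal_of_mul_ofReal_le {m B : ℝ≥0∞} {a : ℝ} (hm0 : m ≠ 0) (hm : m ≠ ⊤)
    (hB : B ≠ ⊤) (h : m * ENNReal.ofReal a ≤ B) : a ≤ B.toReal / m.toReal := by
  rw [mul_comm, ← ENNReal.le_div_iff_mul_le (Or.inl hm0) (Or.inl hm)] at h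
  rw [← ENNReal.toReal_div]
  exact (ENNReal.ofReal_le_iff_le_toReal (ENNReal.div_ne_top hB hm0)).1 h

theorem IsConformalChart.eventually_exists_re_majorant [IsFiniteMeasure ν]
    (hc : IsConformalChart Ω ψ G) (hu : IsExhaustion u Ω) (hν : IsRieszMeasure u Ω ν)
    (hμ : ∀ r < 0, IsMAMeasure u Ω ν r (μfam r)) (hp : 1 ≤ p) (hf : MemPS p Ω μfam f)
    (hR₀ : 0 ≤ R₀) (hR₀1 : R₀ < 1) (hm : ν (sublevel Ω (fun z => ‖G z‖) R₀) ≠ 0) :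
    ∀ᶠ δ in 𝓝[>] (0 : ℝ), ∃ P : ℂ → ℂ, Differentiable ℂ P ∧
      (∀ w ∈ sphere (0 : ℂ) (1 - δ), ‖f (ψ w)‖ ^ p ≤ (P w).re) ∧
      ‖P 0‖ ≤ 4 / (1 - R₀) * (2 ^ (p - 1) * ((psNormPow p μfam f).toReal + δ +
        δ * (ν univ).toReal) / (ν (sublevel Ω (fun z => ‖G z‖) R₀)).toReal + 2 * δ) := by
  filter_upwards [self_mem_nhdsWithin, nhdsWithin_le_nhds (eventually_le_nhds
    (by linarith : 0 < (1 - R₀) / 2))] with δ (hδ : 0 < δ) hδR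
  obtain ⟨s, hs, hKs⟩ := hu.exists_subset_sublevel
    (hc.isCompact_setOf_norm_le (sub_lt_self 1 hδ)) fun z hz => hz.1
  have hlt : psNormPow p μfam f < psNormPow p μfam f + ENNReal.ofReal δ :=
    ENNReal.lt_add_right hf.2.ne (ENNReal.ofReal_pos.2 hδ).ne'
  obtain ⟨r, hrint, hr, hsr⟩ := ((eventually_lt_of_limsup_lt hlt).and
    (eventually_mem_nhdsWithin.and (nhdsWithin_le_nhds (eventually_gt_nhds hs)))).exists
  obtain ⟨P, hP, hsphere, hP0⟩ := hc.exists_entire_re_majorant (hμ r hr) hν hu hr hp hf.1 hR₀ hδ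
    (by linarith : (1 + R₀) / 2 ≤ 1 - δ) (sub_lt_self 1 hδ)
    (hKs.trans fun z hz => ⟨hz.1, hz.2.trans hsr⟩)
  refine ⟨P, hP, hsphere, ?_⟩
  have hN : psNormPow p μfam f ≠ ⊤ := hf.2.ne
  have hbound := le_div_toReal_of_mul_ofReal_le hm (measure_ne_top _ _) (by finiteness)
    (hP0.trans (mul_le_mul_right (add_le_add_left hrint.le _) _))
  rw [ENNReal.toReal_mul, ENNReal.toReal_add (by finiteness) (by finiteness),
    ENNReal.toReal_add hN (by finiteness), ENNReal.toReal_mul,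
    ENNReal.toReal_ofReal (by positivity), ENNReal.toReal_ofReal hδ.le] at hbound
  calc ‖P 0‖ = 4 / (1 - R₀) * ((1 - R₀) / 4 * ‖P 0‖) := by
        field_simp [(sub_pos.2 hR₀1).ne']
    _ ≤ _ := mul_le_mul_of_nonneg_left (sub_le_iff_le_add.1 hbound)
        (div_nonneg (by norm_num) (by linarith))

theorem IsConformalChart.measure_ne_zero [IsFiniteMeasure ν] (hc : IsConformalChart Ω ψ G)
    (hu : IsExhaustion u Ω) (hν : IsRieszMeasure u Ω ν)
    (hμ : ∀ r < 0, IsMAMeasure u Ω ν r (μfam r)) : ν Ω ≠ 0 := by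
  have h0 : ψ 0 ∈ Ω := hc.mapsTo (mem_ball_self one_pos)
  have hneg := hu.neg _ h0
  obtain ⟨νr, hνr, -⟩ := hμ (u (ψ 0) / 2) (by linarith)
  exact hν.measure_ne_zero hνr hc.isOpen hu (by linarith) ⟨ψ 0, h0, by linarith⟩

theorem IsConformalChart.exists_harmonic_majorant [IsFiniteMeasure ν]
    (hc : IsConformalChart Ω ψ G) (hu : IsExhaustion u Ω) (hν : IsRieszMeasure u Ω ν)
    (hμ : ∀ r < 0, IsMAMeasure u Ω ν r (μfam r)) (hp : 1 ≤ p) :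
    ∃ C > 0, ∀ f, MemPS p Ω μfam f → ∃ h, HarmonicOn h Ω ∧ ∀ z ∈ Ω,
      h z ∈ Icc (‖f z‖ ^ p) ((1 + ‖G z‖) / (1 - ‖G z‖) * (C * (psNormPow p μfam f).toReal)) := by
  obtain ⟨R₀, ⟨hR₀, hR₀1⟩, hm⟩ :=
    hc.exists_measure_sublevel_ne_zero (hc.measure_ne_zero hu hν hμ)
  set m := (ν (sublevel Ω (fun z => ‖G z‖) R₀)).toReal
  have hmpos : 0 < m := ENNReal.toReal_pos hm (measure_ne_top _ _)
  refine ⟨4 / (1 - R₀) * (2 ^ (p - 1) / m),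
    mul_pos (div_pos (by norm_num) (sub_pos.2 hR₀1)) (by positivity), fun f hf => ?_⟩
  have hF : DifferentiableOn ℂ (fun w => f (ψ w)) (ball 0 1) :=
    hf.1.comp hc.differentiableOn hc.mapsTo
  have hlim : Tendsto (fun δ => 4 / (1 - R₀) * (2 ^ (p - 1) * ((psNormPow p μfam f).toReal + δ +
      δ * (ν univ).toReal) / m + 2 * δ)) (𝓝[>] 0)
      (𝓝 (4 / (1 - R₀) * (2 ^ (p - 1) / m) * (psNormPow p μfam f).toReal)) :=
    (Continuous.tendsto' (by fun_prop) 0 _ (by ring)).mono_left nhdsWithin_le_nhds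
  obtain ⟨Q, hQ, hQmem⟩ := exists_re_majorant_of_eventually hp hF hlim
    (hc.eventually_exists_re_majorant hu hν hμ hp hf hR₀ hR₀1 hm)
  refine ⟨fun z => (Q (G z)).re, (harmonicOn_iff_harmonicOnNhd hc.isOpen).2 fun z hz =>
    ((hQ.comp hc.differentiableOn_inv hc.mapsTo_inv).analyticOnNhd hc.isOpen z hz).harmonicAt_re,
    fun z hz => ?_⟩
  simpa only [hc.rightInvOn hz] using hQmem (G z) (hc.mapsTo_inv hz)

theorem ofReal_rpow_inv_le_of_le_mul_toReal {a C : ℝ} {N : ℝ≥0∞} (hp : 0 ≤ p) (ha : 0 ≤ a)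
    (hC : 0 ≤ C) (hN : N ≠ ⊤) (h : a ≤ C * N.toReal) :
    ENNReal.ofReal (a ^ (1 / p)) ≤ ENNReal.ofReal (C ^ (1 / p)) * N ^ (1 / p) := by
  have hp' : 0 ≤ 1 / p := by positivity
  rw [← ENNReal.ofReal_rpow_of_nonneg ha hp', ← ENNReal.ofReal_rpow_of_nonneg hC hp',
    ← ENNReal.mul_rpow_of_nonneg _ _ hp']
  refine ENNReal.rpow_le_rpow ?_ hp'
  rw [← ENNReal.ofReal_toReal hN, ← ENNReal.ofReal_mul hC]
  exact ENNReal.ofReal_le_ofReal h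

end HarmonicMajorant

/-! ### Summable combinations of functions -/

section BanachSteinhaus

variable {ι α 𝕜 E F : Type*} {_ : MeasurableSpace α} [NontriviallyNormedField 𝕜]
  [NormedAddCommGroup E] [NormedSpace 𝕜 E] [NormedAddCommGroup F] [NormedSpace 𝕜 F]
  {T : α → E →L[𝕜] F} {q : ℝ≥0∞}

theorem isClosed_setOf_eLpNorm_le {m : Measure α}
    (hT : ∀ a, AEStronglyMeasurable (fun x => T x a) m) (C : ℝ≥0∞) :
    IsClosed {a | eLpNorm (fun x => T x a) q m ≤ C} := by
  refine IsSeqClosed.isClosed fun v a hv hva => ?_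
  refine (Lp.eLpNorm_lim_le_liminf_eLpNorm (fun n => hT (v n)) _
    (ae_of_all _ fun x => ((T x).continuous.tendsto a).comp hva)).trans ?_
  exact liminf_le_of_le (by isBoundedDefault) fun b hb =>
    (hb.exists.choose_spec).trans (hv _)

theorem eLpNorm_le_of_forall_ball {m : Measure α}
    (hT : ∀ a, AEStronglyMeasurable (fun x => T x a) m) (hq : 1 ≤ q) {C : ℝ≥0∞} {a₀ : E} {ε : ℝ}
    {c : 𝕜} (hc : c ≠ 0) (hcε : ‖c‖ < ε)
    (hball : ∀ a ∈ ball a₀ ε, eLpNorm (fun x => T x a) q m ≤ C) {a : E} (ha : ‖a‖ ≤ 1) :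
    eLpNorm (fun x => T x a) q m ≤ ‖c⁻¹‖ₑ * (C + C) := by
  have hmem : a₀ + c • a ∈ ball a₀ ε := by
    rw [mem_ball, dist_self_add_left, norm_smul]
    exact (mul_le_of_le_one_right (norm_nonneg c) ha).trans_lt hcε
  have hmem₀ : a₀ ∈ ball a₀ ε := mem_ball_self ((norm_nonneg c).trans_lt hcε)
  have heq : (fun x => T x a) = c⁻¹ • ((fun x => T x (a₀ + c • a)) - fun x => T x a₀) := by
    ext x
    simp [hc]
  rw [heq]
  refine eLpNorm_const_smul_le.trans (mul_le_mul_right ?_ _)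
  exact (eLpNorm_sub_le (hT _) (hT _) hq).trans
    (add_le_add (hball _ hmem) (hball _ hmem₀))

theorem banachSteinhaus_eLpNorm [CompleteSpace E] {l : Filter ι} [l.IsCountablyGenerated]
    {μ : ι → Measure α} (hT : ∀ᶠ i in l, ∀ a, AEStronglyMeasurable (fun x => T x a) (μ i))
    (hq : 1 ≤ q)
    (hbdd : ∀ a, ∃ C : ℝ≥0∞, C < ⊤ ∧ ∀ᶠ i in l, eLpNorm (fun x => T x a) q (μ i) ≤ C) :
    ∃ C : ℝ≥0∞, C < ⊤ ∧ ∀ᶠ i in l, ∀ a, ‖a‖ ≤ 1 → eLpNorm (fun x => T x a) q (μ i) ≤ C := by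
  obtain ⟨s, hs⟩ := l.exists_antitone_basis
  set J : ℕ → Set ι := fun N => {i ∈ s N | ∀ a, AEStronglyMeasurable (fun x => T x a) (μ i)}
  set A : ℕ → Set E := fun N => ⋂ i ∈ J N, {a | eLpNorm (fun x => T x a) q (μ i) ≤ N}
  have hA_closed : ∀ N, IsClosed (A N) := fun N =>
    isClosed_biInter fun i hi => isClosed_setOf_eLpNorm_le hi.2 N
  have hA_union : ⋃ N, A N = univ := by
    refine eq_univ_of_forall fun a => mem_iUnion.2 ?_
    obtain ⟨C, hC, hev⟩ := hbdd a
    obtain ⟨N, hN⟩ := hs.mem_iff.1 hev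
    obtain ⟨M, hM⟩ := ENNReal.exists_nat_gt hC.ne
    refine ⟨max N M, mem_iInter₂.2 fun i hi => ?_⟩
    calc eLpNorm (fun x => T x a) q (μ i) ≤ C := hN (hs.antitone (le_max_left N M) hi.1)
      _ ≤ (max N M : ℕ) := hM.le.trans (Nat.cast_le.2 (le_max_right N M))
  obtain ⟨N, a₀, ha₀⟩ := nonempty_interior_of_iUnion_of_closed hA_closed hA_union
  obtain ⟨ε, hε, hball⟩ := Metric.isOpen_iff.1 isOpen_interior a₀ ha₀
  obtain ⟨c, hc0, hcε⟩ := NormedField.exists_norm_lt 𝕜 hε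
  refine ⟨‖c⁻¹‖ₑ * (N + N), by finiteness, ?_⟩
  filter_upwards [hs.mem N, hT] with i hi hTi a ha
  exact eLpNorm_le_of_forall_ball hTi hq (norm_pos_iff.1 hc0) hcε
    (fun b hb => mem_iInter₂.1 (interior_subset (hball hb)) i ⟨hi, hTi⟩) ha

end BanachSteinhaus

section SummableCombinations

variable {ι α : Type*} {_ : MeasurableSpace α} {q : ℝ≥0∞}

/-- The functional `a ↦ ∑ aₖ bₖ` on `ℓ¹` given by a bounded sequence `b`; it is `0` when `b` is
unbounded. -/
def lpOnePairing (b : ℕ → ℂ) : lp (fun _ : ℕ => ℂ) 1 →L[ℂ] ℂ :=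
  open Classical in
  if hb : Memℓp b ∞ then
    (lp.dualPairing 1 ∞ (fun _ => ContinuousLinearMap.mul ℂ ℂ) (K := 1)
      fun _ => ContinuousLinearMap.opNorm_mul_le ℂ ℂ).flip ⟨b, hb⟩
  else 0

theorem lpOnePairing_apply {b : ℕ → ℂ} (hb : Memℓp b ∞) (a : lp (fun _ : ℕ => ℂ) 1) :
    lpOnePairing b a = ∑' k, a k * b k := by
  rw [lpOnePairing, dif_pos hb]
  rfl

theorem memℓp_top_of_tendsto {b : ℕ → ℂ} {c : ℂ} (h : Tendsto b atTop (𝓝 c)) : Memℓp b ∞ :=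
  memℓp_infty h.norm.bddAbove_range

theorem tendsto_lpOnePairing_single {b : ℕ → ℂ} {c : ℂ} (h : Tendsto b atTop (𝓝 c)) :
    Tendsto (fun k => lpOnePairing b (lp.single 1 k 1)) atTop (𝓝 c) := by
  refine h.congr fun k => ?_
  rw [lpOnePairing_apply (memℓp_top_of_tendsto h),
    tsum_eq_single k fun j hj => by rw [lp.single_apply_ne _ _ _ hj, zero_mul],
    lp.single_apply_self, one_mul]

theorem memℓp_one_iff_summable {a : ℕ → ℂ} : Memℓp a 1 ↔ Summable fun k => ‖a k‖ := by
  simp [memℓp_gen_iff (p := 1) (E := fun _ => ℂ) (by simp)]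

theorem exists_summable_limsup_eLpNorm_eq_top {μ : ι → Measure α} {l : Filter ι}
    [l.IsCountablyGenerated] {b : ℕ → α → ℂ} {f : α → ℂ} (hq : 1 ≤ q)
    (hmeas : ∀ᶠ i in l, ∀ a : ℕ → ℂ, (Summable fun k => ‖a k‖) →
      AEStronglyMeasurable (fun x => ∑' k, a k * b k x) (μ i))
    (hlim : ∀ᶠ i in l, ∀ᵐ x ∂μ i, Tendsto (b · x) atTop (𝓝 (f x)))
    (htop : limsup (fun i => eLpNorm f q (μ i)) l = ⊤) :
    ∃ a : ℕ → ℂ, (Summable fun k => ‖a k‖) ∧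
      limsup (fun i => eLpNorm (fun x => ∑' k, a k * b k x) q (μ i)) l = ⊤ := by
  by_contra! hfin
  set T : α → lp (fun _ : ℕ => ℂ) 1 →L[ℂ] ℂ := fun x => lpOnePairing (b · x)
  have hsum : ∀ a : lp (fun _ : ℕ => ℂ) 1, Summable fun k => ‖a k‖ := fun a =>
    memℓp_one_iff_summable.1 (lp.memℓp a)
  have hTae : ∀ᶠ i in l, ∀ a, (fun x => T x a) =ᵐ[μ i] fun x => ∑' k, a k * b k x :=
    hlim.mono fun i hi a => hi.mono fun x hx => lpOnePairing_apply (memℓp_top_of_tendsto hx) a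
  have hTmeas : ∀ᶠ i in l, ∀ a, AEStronglyMeasurable (fun x => T x a) (μ i) := by
    filter_upwards [hTae, hmeas] with i hi hmi a
    exact (hmi a (hsum a)).congr (hi a).symm
  have hTbdd : ∀ a, ∃ C : ℝ≥0∞, C < ⊤ ∧ ∀ᶠ i in l, eLpNorm (fun x => T x a) q (μ i) ≤ C := by
    intro a
    obtain ⟨C, hltC, hC⟩ := exists_between (hfin a (hsum a)).lt_top
    refine ⟨C, hC, ?_⟩
    filter_upwards [eventually_lt_of_limsup_lt hltC, hTae] with i hi hTi
    exact (eLpNorm_congr_ae (hTi a)).trans_le hi.le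
  obtain ⟨C, hC, hle⟩ := banachSteinhaus_eLpNorm hTmeas hq hTbdd
  refine (limsup_le_of_le (by isBoundedDefault) ?_ : _ ≤ C).not_gt (htop ▸ hC)
  filter_upwards [hle, hlim, hTmeas] with i hi hlimi hmi
  have hsingle : ∀ k, ‖lp.single (E := fun _ : ℕ => ℂ) 1 k 1‖ ≤ 1 := fun k => by
    rw [lp.norm_single one_pos, norm_one]
  have hTlim : ∀ᵐ x ∂μ i, Tendsto (fun k => T x (lp.single 1 k 1)) atTop (𝓝 (f x)) :=
    hlimi.mono fun x hx => tendsto_lpOnePairing_single hx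
  exact (Lp.eLpNorm_lim_le_liminf_eLpNorm (fun k => hmi _) f hTlim).trans
    (liminf_le_of_le (by isBoundedDefault) fun c hc =>
      hc.exists.choose_spec.trans (hi _ (hsingle _)))

end SummableCombinations

section Series

variable {U V : Set ℂ} {a : ℕ → ℂ} {b g : ℕ → ℂ → ℂ} {p : ℝ}

theorem tsum_mul_rpow_le {α x : ℕ → ℝ} (hp : 1 ≤ p) (hα : ∀ k, 0 ≤ α k) (hx : ∀ k, 0 ≤ x k)
    (hsα : Summable α) (hsx : Summable fun k => α k * x k) (hsp : Summable fun k => α k * x k ^ p) :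
    (∑' k, α k * x k) ^ p ≤ (∑' k, α k) ^ (p - 1) * ∑' k, α k * x k ^ p := by
  have hp0 : 0 < p := one_pos.trans_le hp
  have hp1 : 0 ≤ 1 - p⁻¹ := sub_nonneg.2 (inv_le_one_of_one_le₀ hp)
  have hA : 0 ≤ ∑' k, α k := tsum_nonneg hα
  have hD : 0 ≤ ∑' k, α k * x k ^ p := tsum_nonneg fun k =>
    mul_nonneg (hα k) (Real.rpow_nonneg (hx k) p)
  have hS : 0 ≤ ∑' k, α k * x k := tsum_nonneg fun k => mul_nonneg (hα k) (hx k)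
  have holder : ∑' k, α k * x k ≤ (∑' k, α k) ^ (1 - p⁻¹) * (∑' k, α k * x k ^ p) ^ p⁻¹ :=
    le_of_tendsto_of_tendsto' hsx.hasSum
      ((hsα.hasSum.rpow_const (.inr hp1)).mul (hsp.hasSum.rpow_const (.inr (by positivity))))
      fun s => Real.inner_le_weight_mul_Lp_of_nonneg s hp α x hα hx
  calc (∑' k, α k * x k) ^ p
      ≤ ((∑' k, α k) ^ (1 - p⁻¹) * (∑' k, α k * x k ^ p) ^ p⁻¹) ^ p := by gcongr
    _ = (∑' k, α k) ^ (p - 1) * ∑' k, α k * x k ^ p := by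
      rw [Real.mul_rpow (by positivity) (by positivity), Real.rpow_inv_rpow hD hp0.ne',
        ← Real.rpow_mul hA, sub_mul, one_mul, inv_mul_cancel₀ hp0.ne']

theorem summable_norm_mul {b : ℕ → ℂ} {B : ℝ} (ha : Summable fun k => ‖a k‖)
    (hb : ∀ k, ‖b k‖ ≤ B) : Summable fun k => ‖a k * b k‖ :=
  (ha.mul_right B).of_nonneg_of_le (fun _ => norm_nonneg _) fun k => by
    rw [norm_mul]
    gcongr
    exact hb k

theorem norm_tsum_mul_le {b : ℕ → ℂ} {B : ℝ} (ha : Summable fun k => ‖a k‖)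
    (hb : ∀ k, ‖b k‖ ≤ B) : ‖∑' k, a k * b k‖ ≤ (∑' k, ‖a k‖) * B := by
  refine tsum_of_norm_bounded (ha.hasSum.mul_right B) fun k => ?_
  rw [norm_mul]
  gcongr
  exact hb k

/-- The functions `b k` are bounded near every point of `U`, uniformly in `k`. -/
def UniformlyLocallyBoundedOn (b : ℕ → ℂ → ℂ) (U : Set ℂ) : Prop :=
  ∀ z ∈ U, ∃ B, ∀ᶠ w in 𝓝 z, ∀ k, ‖b k w‖ ≤ B

theorem UniformlyLocallyBoundedOn.exists_norm_le (hb : UniformlyLocallyBoundedOn b U) {z : ℂ}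
    (hz : z ∈ U) : ∃ B, ∀ k, ‖b k z‖ ≤ B :=
  (hb z hz).imp fun _ h => h.self_of_nhds

theorem UniformlyLocallyBoundedOn.comp {G : ℂ → ℂ} (hb : UniformlyLocallyBoundedOn b V)
    (hU : IsOpen U) (hG : ContinuousOn G U) (hGV : MapsTo G U V) :
    UniformlyLocallyBoundedOn (fun k z => b k (G z)) U := fun z hz =>
  (hb (G z) (hGV hz)).imp fun _ h => (hG.continuousAt (hU.mem_nhds hz)).eventually h

theorem UniformlyLocallyBoundedOn.differentiableOn_tsum_mul (hb : UniformlyLocallyBoundedOn b U)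
    (hU : IsOpen U) (hd : ∀ k, DifferentiableOn ℂ (b k) U) (ha : Summable fun k => ‖a k‖) :
    DifferentiableOn ℂ (fun z => ∑' k, a k * b k z) U := fun z hz => by
  obtain ⟨B, hB⟩ := hb z hz
  obtain ⟨V, hV, hVo, hzV⟩ := _root_.eventually_nhds_iff.1 (hB.and (hU.mem_nhds hz))
  refine DifferentiableAt.differentiableWithinAt (DifferentiableOn.differentiableAt
    (differentiableOn_tsum_of_summable_norm (ha.mul_right B)
      (fun k => ((hd k).mono fun w hw => (hV w hw).2).const_mul (a k)) hVo fun k w hw => ?_)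
    (hVo.mem_nhds hzV))
  rw [norm_mul]
  gcongr
  exact (hV w hw).1 k

theorem norm_le_of_norm_rpow_le_re {x w : ℂ} {B : ℝ} (hp : 0 < p) (hx : ‖x‖ ^ p ≤ w.re)
    (hw : ‖w‖ ≤ B) : ‖x‖ ≤ B ^ p⁻¹ := by
  have hxB : ‖x‖ ^ p ≤ B := hx.trans ((re_le_norm w).trans hw)
  exact (Real.le_rpow_inv_iff_of_pos (norm_nonneg x)
    ((Real.rpow_nonneg (norm_nonneg x) p).trans hxB) hp).2 hxB

theorem norm_tsum_mul_rpow_le_re {b g : ℕ → ℂ} {B : ℝ} (hp : 1 ≤ p)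
    (hle : ∀ k, ‖b k‖ ^ p ≤ (g k).re) (hg : ∀ k, ‖g k‖ ≤ B) (ha : Summable fun k => ‖a k‖) :
    ‖∑' k, a k * b k‖ ^ p ≤
      (((∑' k, ‖a k‖) ^ (p - 1) : ℝ) * ∑' k, (‖a k‖ : ℂ) * g k).re := by
  have ha' : Summable fun k => ‖(‖a k‖ : ℂ)‖ := by simpa using ha
  have hsb := summable_norm_mul ha fun k =>
    norm_le_of_norm_rpow_le_re (one_pos.trans_le hp) (hle k) (hg k)
  have hsg := (summable_norm_mul ha' hg).of_norm
  have hsre : Summable fun k => ‖a k‖ * (g k).re := by simpa using reCLM.summable hsg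
  have hsp : Summable fun k => ‖a k‖ * ‖b k‖ ^ p :=
    hsre.of_nonneg_of_le (fun k => by positivity) fun k => by gcongr; exact hle k
  calc ‖∑' k, a k * b k‖ ^ p ≤ (∑' k, ‖a k‖ * ‖b k‖) ^ p := by
        gcongr
        simpa only [norm_mul] using norm_tsum_le_tsum_norm hsb
    _ ≤ (∑' k, ‖a k‖) ^ (p - 1) * ∑' k, ‖a k‖ * ‖b k‖ ^ p :=
      tsum_mul_rpow_le hp (fun _ => norm_nonneg _) (fun _ => norm_nonneg _) ha
        (by simpa only [norm_mul] using hsb) hsp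
    _ ≤ (∑' k, ‖a k‖) ^ (p - 1) * ∑' k, ‖a k‖ * (g k).re := by
      gcongr with k
      exact hle k
    _ = _ := by simp only [re_ofReal_mul, re_tsum hsg]

theorem exists_harmonic_majorant_tsum_mul (hU : IsOpen U) (hp : 1 ≤ p)
    (hle : ∀ k, ∀ z ∈ U, ‖b k z‖ ^ p ≤ (g k z).re) (hg : ∀ k, DifferentiableOn ℂ (g k) U)
    (hgb : UniformlyLocallyBoundedOn g U) (ha : Summable fun k => ‖a k‖) :
    ∃ H, HarmonicOn H U ∧ (∀ z ∈ U, ‖∑' k, a k * b k z‖ ^ p ≤ H z) ∧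
      ∀ z B, (∀ k, ‖g k z‖ ≤ B) → H z ≤ (∑' k, ‖a k‖) ^ p * B := by
  set A := ∑' k, ‖a k‖
  have hA : 0 ≤ A := tsum_nonneg fun _ => norm_nonneg _
  have ha' : Summable fun k => ‖(‖a k‖ : ℂ)‖ := by simpa using ha
  have hdiff : DifferentiableOn ℂ (fun z => (A ^ (p - 1) : ℝ) * ∑' k, (‖a k‖ : ℂ) * g k z) U :=
    (hgb.differentiableOn_tsum_mul hU hg ha').const_mul _
  refine ⟨fun z => ((A ^ (p - 1) : ℝ) * ∑' k, (‖a k‖ : ℂ) * g k z).re,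
    (harmonicOn_iff_harmonicOnNhd hU).2 fun z hz => (hdiff.analyticOnNhd hU z hz).harmonicAt_re,
    fun z hz => ?_, fun z B hB => ?_⟩
  · obtain ⟨B, hB⟩ := hgb.exists_norm_le hz
    exact norm_tsum_mul_rpow_le_re hp (fun k => hle k z hz) hB ha
  · calc ((A ^ (p - 1) : ℝ) * ∑' k, (‖a k‖ : ℂ) * g k z).re
        ≤ A ^ (p - 1) * ‖∑' k, (‖a k‖ : ℂ) * g k z‖ := by
          rw [re_ofReal_mul]
          gcongr
          exact re_le_norm _
      _ ≤ A ^ (p - 1) * (A * B) := by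
        gcongr
        simpa only [norm_real, norm_norm] using norm_tsum_mul_le ha' hB
      _ = A ^ p * B := by
        rw [← mul_assoc, ← Real.rpow_add_one' hA (by linarith), sub_add_cancel]

theorem tendsto_isLeastHarmMaj_sum_sub_tsum {h : ℕ → ℂ → ℝ} {z₀ : ℂ} (hU : IsOpen U) (hp : 1 ≤ p)
    (hle : ∀ k, ∀ z ∈ U, ‖b k z‖ ^ p ≤ (g k z).re) (hg : ∀ k, DifferentiableOn ℂ (g k) U)
    (hgb : UniformlyLocallyBoundedOn g U) (ha : Summable fun k => ‖a k‖)
    (hz₀ : z₀ ∈ U)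
    (hh : ∀ n, IsLeastHarmMaj p U
      (fun z => ∑ k ∈ Finset.range n, a k * b k z - ∑' k, a k * b k z) (h n)) :
    Tendsto (fun n => h n z₀) atTop (𝓝 0) := by
  obtain ⟨B, hB⟩ := hgb.exists_norm_le hz₀
  have hlower : ∀ n, 0 ≤ h n z₀ := fun n =>
    (by positivity : (0 : ℝ) ≤ _).trans ((hh n).2.1 z₀ hz₀)
  have hupper : ∀ n, h n z₀ ≤ (∑' k, ‖a (k + n)‖) ^ p * B := fun n => by
    obtain ⟨H, hH, hmaj, hbound⟩ := exists_harmonic_majorant_tsum_mul (a := fun k => a (k + n))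
      (b := fun k => b (k + n)) hU hp (fun k => hle (k + n)) (fun k => hg (k + n))
      (fun z hz => (hgb z hz).imp fun _ hw => hw.mono fun _ hk k => hk (k + n))
      ((summable_nat_add_iff n).2 ha)
    refine ((hh n).2.2 H hH (fun z hz => ?_) z₀ hz₀).trans (hbound z₀ B fun k => hB (k + n))
    obtain ⟨B', hB'⟩ := hgb.exists_norm_le hz
    have hsum := (summable_norm_mul ha fun k =>
      norm_le_of_norm_rpow_le_re (one_pos.trans_le hp) (hle k z hz) (hB' k)).of_norm
    beta_reduce
    rw [← hsum.sum_add_tsum_nat_add n, sub_add_cancel_left, norm_neg]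
    exact hmaj z hz
  have htail : Tendsto (fun n => (∑' k, ‖a (k + n)‖) ^ p * B) atTop (𝓝 0) := by
    have hp0 : 0 < p := one_pos.trans_le hp
    simpa only [Real.zero_rpow hp0.ne', zero_mul] using
      ((tendsto_sum_nat_add fun k => ‖a k‖).rpow_const (.inr hp0.le)).mul_const B
  exact squeeze_zero hlower hupper htail

end Series

/-! ### Dilates -/

section Dilate

variable {F : ℂ → ℂ} {w : ℂ}

/-- The dilate `w ↦ F (ρ w)` of a function on the unit disc, with `ρ = k / (k + 1)`; any sequence of
radii tending to `1` from below would do. -/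
def dilate (F : ℂ → ℂ) (k : ℕ) (w : ℂ) : ℂ :=
  F ((k / (k + 1) : ℝ) • w)

theorem norm_div_add_one_smul (k : ℕ) (w : ℂ) :
    ‖(k / (k + 1) : ℝ) • w‖ = k / (k + 1) * ‖w‖ := by
  rw [norm_smul, Real.norm_of_nonneg (by positivity)]

theorem norm_div_add_one_smul_le (k : ℕ) (w : ℂ) : ‖(k / (k + 1) : ℝ) • w‖ ≤ ‖w‖ := by
  rw [norm_div_add_one_smul]
  exact mul_le_of_le_one_left (norm_nonneg w) (div_le_one_of_le₀ (by linarith) (by positivity))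

theorem mapsTo_div_add_one_smul_ball (k : ℕ) :
    MapsTo (fun w : ℂ => (k / (k + 1) : ℝ) • w) (ball 0 1) (ball 0 1) := fun w hw =>
  mem_ball_zero_iff.2 ((norm_div_add_one_smul_le k w).trans_lt (mem_ball_zero_iff.1 hw))

theorem differentiableOn_dilate (hF : DifferentiableOn ℂ F (ball 0 1)) (k : ℕ) :
    DifferentiableOn ℂ (dilate F k) (ball 0 1) :=
  hF.comp (differentiableOn_id.fun_const_smul _) (mapsTo_div_add_one_smul_ball k)

theorem exists_norm_le_of_lt_one (hF : ContinuousOn F (ball 0 1)) {R : ℝ} (hR : R < 1) :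
    ∃ B, ∀ w : ℂ, ‖w‖ ≤ R → ‖F w‖ ≤ B := by
  obtain ⟨B, hB⟩ := (isCompact_closedBall (0 : ℂ) R).exists_bound_of_continuousOn
    (hF.mono (closedBall_subset_ball hR))
  exact ⟨B, fun w hw => hB w (mem_closedBall_zero_iff.2 hw)⟩

theorem exists_norm_dilate_le (hF : ContinuousOn F (ball 0 1)) (k : ℕ) :
    ∃ B, ∀ w ∈ ball (0 : ℂ) 1, ‖dilate F k w‖ ≤ B := by
  have hk : (k / (k + 1) : ℝ) < 1 := (div_lt_one (by positivity)).2 (lt_add_one _)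
  obtain ⟨B, hB⟩ := exists_norm_le_of_lt_one hF hk
  refine ⟨B, fun w hw => hB _ ?_⟩
  rw [norm_div_add_one_smul]
  exact mul_le_of_le_one_right (by positivity) (mem_ball_zero_iff.1 hw).le

theorem uniformlyLocallyBoundedOn_dilate (hF : ContinuousOn F (ball 0 1)) :
    UniformlyLocallyBoundedOn (dilate F) (ball 0 1) := fun z hz => by
  obtain ⟨R, hzR, hR⟩ := exists_between (mem_ball_zero_iff.1 hz)
  obtain ⟨B, hB⟩ := exists_norm_le_of_lt_one hF hR
  exact ⟨B, (continuous_norm.tendsto z).eventually_le_const hzR |>.mono fun w hw k =>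
    hB _ ((norm_div_add_one_smul_le k w).trans hw)⟩

theorem tendsto_dilate (hF : ContinuousOn F (ball 0 1)) (hw : w ∈ ball 0 1) :
    Tendsto (dilate F · w) atTop (𝓝 (F w)) := by
  refine (hF.continuousAt (isOpen_ball.mem_nhds hw)).tendsto.comp ?_
  simpa only [one_smul] using
    (tendsto_natCast_div_add_atTop (1 : ℝ)).smul_const w

theorem norm_dilate_rpow_le_re {P : ℂ → ℂ} {p : ℝ}
    (hle : ∀ w ∈ ball (0 : ℂ) 1, ‖F w‖ ^ p ≤ (P w).re) (k : ℕ) (hw : w ∈ ball 0 1) :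
    ‖dilate F k w‖ ^ p ≤ (dilate P k w).re :=
  hle _ (mapsTo_div_add_one_smul_ball k hw)

end Dilate

/-! ### The Poletsky–Stessin norm -/

section PSNorm

variable {Ω : Set ℂ} {u : ℂ → ℝ} {ν : Measure ℂ} {μfam : ℝ → Measure ℂ} {p : ℝ} {f : ℂ → ℂ}

theorem lintegral_ofReal_norm_rpow (hp : 0 < p) (f : ℂ → ℂ) (μ : Measure ℂ) :
    ∫⁻ z, ENNReal.ofReal (‖f z‖ ^ p) ∂μ = eLpNorm f (ENNReal.ofReal p) μ ^ p := by
  rw [eLpNorm_eq_lintegral_rpow_enorm_toReal (ENNReal.ofReal_pos.2 hp).ne' ENNReal.ofReal_ne_top,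
    ENNReal.toReal_ofReal hp.le, one_div, ENNReal.rpow_inv_rpow hp.ne']
  exact lintegral_congr fun z => by
    rw [← ofReal_norm, ENNReal.ofReal_rpow_of_nonneg (norm_nonneg _) hp.le]

theorem psNormPow_eq_limsup_eLpNorm_rpow (hp : 0 < p) :
    psNormPow p μfam f =
      limsup (fun r => eLpNorm f (ENNReal.ofReal p) (μfam r)) (𝓝[<] 0) ^ p := by
  simp only [psNormPow, lintegral_ofReal_norm_rpow hp]
  exact ((ENNReal.orderIsoRpow p hp).limsup_apply).symm

theorem psNormPow_eq_top_iff (hp : 0 < p) :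
    psNormPow p μfam f = ⊤ ↔
      limsup (fun r => eLpNorm f (ENNReal.ofReal p) (μfam r)) (𝓝[<] 0) = ⊤ := by
  rw [psNormPow_eq_limsup_eLpNorm_rpow hp, ENNReal.rpow_eq_top_iff_of_pos hp]

theorem IsMAMeasure.ae_mem {r : ℝ} {μ : Measure ℂ} (hμ : IsMAMeasure u Ω ν r μ) :
    ∀ᵐ z ∂μ, z ∈ Ω :=
  mem_ae_iff.2 hμ.measure_compl

theorem psNormPow_lt_top_of_bounded [IsFiniteMeasure ν] {c : ℝ} (hΩ : IsOpen Ω)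
    (hne : Ω.Nonempty) (hu : IsExhaustion u Ω) (hν : IsRieszMeasure u Ω ν)
    (hμ : ∀ r < 0, IsMAMeasure u Ω ν r (μfam r)) (hp : 0 ≤ p) (hf : ∀ z ∈ Ω, ‖f z‖ ≤ c) :
    psNormPow p μfam f < ⊤ := by
  obtain ⟨z₀, hz₀⟩ := hne
  have hbound : psNormPow p μfam f ≤ ENNReal.ofReal (c ^ p) * ν univ := by
    refine limsup_le_of_le (by isBoundedDefault) ?_
    filter_upwards [self_mem_nhdsWithin, nhdsWithin_le_nhds (lt_mem_nhds (hu.neg z₀ hz₀))]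
      with r hr hur
    calc ∫⁻ z, ENNReal.ofReal (‖f z‖ ^ p) ∂(μfam r)
        ≤ ∫⁻ _, ENNReal.ofReal (c ^ p) ∂(μfam r) := by
          refine lintegral_mono_ae ((hμ r hr).ae_mem.mono fun z hz => ?_)
          gcongr
          exact hf z hz
      _ = ENNReal.ofReal (c ^ p) * μfam r univ := lintegral_const _
      _ ≤ ENNReal.ofReal (c ^ p) * ν univ := by
          exact mul_le_mul_right ((hμ r hr).measure_univ_le hν hΩ hu hr ⟨z₀, hz₀, hur⟩) _
  exact hbound.trans_lt (ENNReal.mul_lt_top ENNReal.ofReal_lt_top (measure_lt_top ν univ))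

end PSNorm

section NotClosed

variable {Ω : Set ℂ} {u : ℂ → ℝ} {ν : Measure ℂ} {μfam : ℝ → Measure ℂ} {ψ G : ℂ → ℂ} {p : ℝ}
  {f F : ℂ → ℂ} {a : ℕ → ℂ}

theorem IsConformalChart.uniformlyLocallyBoundedOn_dilate_comp (hc : IsConformalChart Ω ψ G)
    (hF : DifferentiableOn ℂ F (ball 0 1)) :
    UniformlyLocallyBoundedOn (fun k z => dilate F k (G z)) Ω :=
  (uniformlyLocallyBoundedOn_dilate hF.continuousOn).comp hc.isOpen
    hc.differentiableOn_inv.continuousOn hc.mapsTo_inv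

theorem IsConformalChart.differentiableOn_dilate_comp (hc : IsConformalChart Ω ψ G)
    (hF : DifferentiableOn ℂ F (ball 0 1)) (k : ℕ) :
    DifferentiableOn ℂ (fun z => dilate F k (G z)) Ω :=
  (differentiableOn_dilate hF k).comp hc.differentiableOn_inv hc.mapsTo_inv

theorem IsConformalChart.differentiableOn_tsum_dilate (hc : IsConformalChart Ω ψ G)
    (hF : DifferentiableOn ℂ F (ball 0 1)) (ha : Summable fun k => ‖a k‖) :
    DifferentiableOn ℂ (fun z => ∑' k, a k * dilate F k (G z)) Ω :=
  (hc.uniformlyLocallyBoundedOn_dilate_comp hF).differentiableOn_tsum_mul hc.isOpen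
    (hc.differentiableOn_dilate_comp hF) ha

theorem IsConformalChart.exists_tsum_dilate_psNormPow_eq_top (hc : IsConformalChart Ω ψ G)
    (hμ : ∀ r < 0, IsMAMeasure u Ω ν r (μfam r)) (hp : 1 ≤ p)
    (hf : DifferentiableOn ℂ f Ω) (htop : psNormPow p μfam f = ⊤) :
    ∃ a : ℕ → ℂ, (Summable fun k => ‖a k‖) ∧
      psNormPow p μfam (fun z => ∑' k, a k * dilate (f ∘ ψ) k (G z)) = ⊤ := by
  have hF : DifferentiableOn ℂ (f ∘ ψ) (ball 0 1) := hf.comp hc.differentiableOn hc.mapsTo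
  have hp0 : 0 < p := one_pos.trans_le hp
  simp only [psNormPow_eq_top_iff hp0] at htop ⊢
  have hmem : ∀ᶠ r in 𝓝[<] (0 : ℝ), ∀ᵐ z ∂μfam r, z ∈ Ω :=
    eventually_mem_nhdsWithin.mono fun r hr => (hμ r hr).ae_mem
  refine exists_summable_limsup_eLpNorm_eq_top (ENNReal.one_le_ofReal.2 hp) ?_ ?_ htop
  · filter_upwards [hmem] with r hr a ha
    rw [← Measure.restrict_eq_self_of_ae_mem hr]
    exact (hc.differentiableOn_tsum_dilate hF ha).continuousOn.aestronglyMeasurable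
      hc.isOpen.measurableSet
  · filter_upwards [hmem] with r hr
    filter_upwards [hr] with z hz
    simpa only [Function.comp_apply, hc.rightInvOn hz] using
      tendsto_dilate hF.continuousOn (hc.mapsTo_inv hz)

theorem IsConformalChart.memPS_sum_dilate [IsFiniteMeasure ν] (hc : IsConformalChart Ω ψ G)
    (hne : Ω.Nonempty) (hu : IsExhaustion u Ω) (hν : IsRieszMeasure u Ω ν)
    (hμ : ∀ r < 0, IsMAMeasure u Ω ν r (μfam r)) (hp : 0 ≤ p)
    (hF : DifferentiableOn ℂ F (ball 0 1)) (a : ℕ → ℂ) (s : Finset ℕ) :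
    MemPS p Ω μfam (fun z => ∑ k ∈ s, a k * dilate F k (G z)) := by
  choose B hB using exists_norm_dilate_le hF.continuousOn
  refine ⟨.fun_sum fun k _ => (hc.differentiableOn_dilate_comp hF k).const_mul (a k),
    psNormPow_lt_top_of_bounded (c := ∑ k ∈ s, ‖a k‖ * B k) hc.isOpen hne hu hν hμ hp
      fun z hz => norm_sum_le_of_le s fun k _ => ?_⟩
  rw [norm_mul]
  gcongr
  exact hB k _ (hc.mapsTo_inv hz)

theorem IsConformalChart.exists_not_memPS_tendsto [IsFiniteMeasure ν] {z₀ : ℂ}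
    (hc : IsConformalChart Ω ψ G) (hz₀ : z₀ ∈ Ω) (hu : IsExhaustion u Ω)
    (hν : IsRieszMeasure u Ω ν) (hμ : ∀ r < 0, IsMAMeasure u Ω ν r (μfam r)) (hp : 1 ≤ p)
    (hf : MemHClassical p Ω f) (hfPS : ¬ MemPS p Ω μfam f) :
    ∃ (T : ℂ → ℂ) (S : ℕ → ℂ → ℂ), MemHClassical p Ω T ∧ ¬ MemPS p Ω μfam T ∧
      (∀ n, MemPS p Ω μfam (S n)) ∧
      ∀ h : ℕ → ℂ → ℝ, (∀ n, IsLeastHarmMaj p Ω (fun z => S n z - T z) (h n)) →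
        Tendsto (fun n => h n z₀) atTop (𝓝 0) := by
  obtain ⟨hfd, m, hm, hfm⟩ := hf
  obtain ⟨P, hP, hPre⟩ := hc.exists_re_eq hm
  have hF : DifferentiableOn ℂ (f ∘ ψ) (ball 0 1) := hfd.comp hc.differentiableOn hc.mapsTo
  obtain ⟨a, ha, haTop⟩ := hc.exists_tsum_dilate_psNormPow_eq_top hμ hp hfd <|
    not_lt_top_iff.1 fun hlt => hfPS ⟨hfd, hlt⟩
  have hle : ∀ k, ∀ z ∈ Ω, ‖dilate (f ∘ ψ) k (G z)‖ ^ p ≤ (dilate P k (G z)).re :=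
    fun k z hz => norm_dilate_rpow_le_re
      (fun w hw => (hfm _ (hc.mapsTo hw)).trans_eq (hPre w hw).symm) k (hc.mapsTo_inv hz)
  have hPd := hc.differentiableOn_dilate_comp hP.differentiableOn
  have hPb := hc.uniformlyLocallyBoundedOn_dilate_comp hP.differentiableOn
  refine ⟨fun z => ∑' k, a k * dilate (f ∘ ψ) k (G z),
    fun n z => ∑ k ∈ Finset.range n, a k * dilate (f ∘ ψ) k (G z),
    ⟨hc.differentiableOn_tsum_dilate hF ha, ?_⟩, fun hT => hT.2.ne haTop,
    fun n => hc.memPS_sum_dilate ⟨z₀, hz₀⟩ hu hν hμ (one_pos.trans_le hp).le hF a _,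
    fun h hh => tendsto_isLeastHarmMaj_sum_sub_tsum hc.isOpen hp hle hPd hPb ha hz₀ hh⟩
  obtain ⟨H, hH, hTH, -⟩ := exists_harmonic_majorant_tsum_mul hc.isOpen hp hle hPd hPb ha
  exact ⟨H, hH, hTH⟩

end NotClosed

theorem stmt7_general {Ω : Set ℂ} {ψ : ℂ → ℂ} (hψ : DifferentiableOn ℂ ψ (ball 0 1))
    (hinj : InjOn ψ (ball 0 1)) (himage : ψ '' ball 0 1 = Ω) (hzero : (0 : ℂ) ∈ Ω)
    {u : ℂ → ℝ} (hu : IsExhaustion u Ω)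
    {ν : Measure ℂ} (hν : IsRieszMeasure u Ω ν) (hfin : ν univ < ⊤)
    {μfam : ℝ → Measure ℂ} (hμ : ∀ r < 0, IsMAMeasure u Ω ν r (μfam r))
    {p : ℝ} (hp : 1 ≤ p) :
    (∀ f : ℂ → ℂ, MemPS p Ω μfam f → MemHClassical p Ω f) ∧
    (∃ C : ℝ, 0 < C ∧ ∀ (f : ℂ → ℂ) (h : ℂ → ℝ), MemPS p Ω μfam f →
      IsLeastHarmMaj p Ω f h →
      ENNReal.ofReal ((h 0) ^ (1 / p)) ≤ ENNReal.ofReal C * psNorm p μfam f) ∧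
    ((∃ f : ℂ → ℂ, MemHClassical p Ω f ∧ ¬ MemPS p Ω μfam f) →
      ∃ (f : ℂ → ℂ) (g : ℕ → ℂ → ℂ),
        MemHClassical p Ω f ∧ ¬ MemPS p Ω μfam f ∧ (∀ n, MemPS p Ω μfam (g n)) ∧
        ∀ h : ℕ → ℂ → ℝ, (∀ n, IsLeastHarmMaj p Ω (fun z => g n z - f z) (h n)) →
          Tendsto (fun n => h n 0) atTop (𝓝 0)) := by
  have : IsFiniteMeasure ν := ⟨hfin⟩
  have hc : IsConformalChart Ω ψ (Function.invFunOn ψ (ball 0 1)) :=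
    himage ▸ isConformalChart_invFunOn hψ hinj
  obtain ⟨C, hC, hmaj⟩ := hc.exists_harmonic_majorant hu hν hμ hp
  set ρ := ‖Function.invFunOn ψ (ball 0 1) 0‖
  have hρ : ρ < 1 := mem_ball_zero_iff.1 (hc.mapsTo_inv hzero)
  have hK : 0 < (1 + ρ) / (1 - ρ) * C :=
    mul_pos (div_pos (by positivity) (sub_pos.2 hρ)) hC
  refine ⟨fun f hf => ?_, ⟨((1 + ρ) / (1 - ρ) * C) ^ (1 / p), by positivity, fun f h hf hh => ?_⟩,
    fun ⟨f, hf, hfPS⟩ => hc.exists_not_memPS_tendsto hzero hu hν hμ hp hf hfPS⟩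
  · obtain ⟨h, hh, hfh⟩ := hmaj f hf
    exact ⟨hf.1, h, hh, fun z hz => (hfh z hz).1⟩
  · obtain ⟨H, hH, hfH⟩ := hmaj f hf
    have hh0 : 0 ≤ h 0 := (by positivity : (0 : ℝ) ≤ _).trans (hh.2.1 0 hzero)
    have hle : h 0 ≤ H 0 := hh.2.2 H hH (fun z hz => (hfH z hz).1) 0 hzero
    refine ofReal_rpow_inv_le_of_le_mul_toReal (by positivity) hh0 hK.le hf.2.ne ?_
    exact (hle.trans (hfH 0 hzero).2).trans_eq (mul_assoc _ _ _).symm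

/-- `H^p_u(Ω) ⊆ H^p(Ω)`, the inclusion is continuous for the natural
norms, and if the spaces differ then the image of the inclusion is not closed in
`H^p(Ω)`: some `f ∈ H^p(Ω) ∖ H^p_u(Ω)` is an `H^p(Ω)`-norm limit of members of
`H^p_u(Ω)`. -/
theorem stmt7 (Ω : Set ℂ) (hΩ : AnalyticJordanDomain Ω)
    (u : ℂ → ℝ) (hu : IsExhaustion u Ω)
    (ν : Measure ℂ) (hν : IsRieszMeasure u Ω ν) (hfin : ν Set.univ < ⊤)
    (μfam : ℝ → Measure ℂ) (hμ : ∀ r : ℝ, r < 0 → IsMAMeasure u Ω ν r (μfam r))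
    (p : ℝ) (hp : 1 ≤ p) :
    (∀ f : ℂ → ℂ, MemPS p Ω μfam f → MemHClassical p Ω f) ∧
    (∃ C : ℝ, 0 < C ∧ ∀ (f : ℂ → ℂ) (h : ℂ → ℝ), MemPS p Ω μfam f →
      IsLeastHarmMaj p Ω f h →
      ENNReal.ofReal ((h 0) ^ (1/p)) ≤ ENNReal.ofReal C * psNorm p μfam f) ∧
    ((∃ f : ℂ → ℂ, MemHClassical p Ω f ∧ ¬ MemPS p Ω μfam f) →
      ∃ (f : ℂ → ℂ) (g : ℕ → ℂ → ℂ),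
        MemHClassical p Ω f ∧ ¬ MemPS p Ω μfam f ∧ (∀ n, MemPS p Ω μfam (g n)) ∧
        ∀ h : ℕ → ℂ → ℝ,
          (∀ n, IsLeastHarmMaj p Ω (fun z => g n z - f z) (h n)) →
          Filter.Tendsto (fun n => h n 0) Filter.atTop (nhds 0)) := by
  obtain ⟨U, ψ, -, hU, hψ, hinj, himage, -⟩ := hΩ.analyticBoundary
  have hball : ball 0 1 ⊆ U := ball_subset_closedBall.trans hU
  exact stmt7_general (hψ.mono hball) (hinj.mono hball) himage hΩ.zero_mem hu hν hfin hμ hp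

end
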